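/- arXiv:2602.20201 — 5 statements merged into one kernel-verified Lean document; each statement's English description precedes it below -/
import Mathlib

section
/- Let b ≥ 2 be an integer and let (n_1, n_2, n_3, ℓ_1, ℓ_2, ℓ_3, d_1, d_2, d_3) be a solution of equation (1) in base b. Then ℓ_1 + ℓ_2 + ℓ_3 < n_1 + 2. -/
/-!
A sum of three Fibonacci numbers with largest index `n1` is at most `3 * F_{n1} < 2 ^ (n1 + 1)`.
A number with `L = l1 + l2 + l3` digits in base `b ≥ 2` and nonzero leading digit is at least
`b ^ (L - 1) ≥ 2 ^ (L - 1)`. Comparing the exponents gives `L - 1 < n1 + 1`.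
-/

open Real

/-- A solution of equation (1) in base `b`: integers `n1 ≥ n2 ≥ n3 ≥ 0`,
`l1, l2, l3 ≥ 1`, digits `d1, d2, d3 ∈ {0, …, b-1}` with `d1 ≥ 1`, such that
`F_{n1} + F_{n2} + F_{n3}` equals the concatenation in base `b` of the digit `d1`
repeated `l1` times, `d2` repeated `l2` times, and `d3` repeated `l3` times. -/
def SatisfiesEq1 (b n1 n2 n3 l1 l2 l3 d1 d2 d3 : ℕ) : Prop :=
  n3 ≤ n2 ∧ n2 ≤ n1 ∧
  1 ≤ l1 ∧ 1 ≤ l2 ∧ 1 ≤ l3 ∧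
  d1 < b ∧ d2 < b ∧ d3 < b ∧ 1 ≤ d1 ∧
  Nat.fib n1 + Nat.fib n2 + Nat.fib n3 =
    d1 * ((b ^ l1 - 1) / (b - 1)) * b ^ (l2 + l3) +
    d2 * ((b ^ l2 - 1) / (b - 1)) * b ^ l3 +
    d3 * ((b ^ l3 - 1) / (b - 1))

theorem two_mul_fib_le_two_pow (n : ℕ) : 2 * Nat.fib n ≤ 2 ^ n := by
  induction n using Nat.twoStepInduction with
  | zero => simp
  | one => simp
  | more n h0 h1 =>
    rw [Nat.fib_add_two]
    have e1 : 2 ^ (n + 1) = 2 * 2 ^ n := by ring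
    have e2 : 2 ^ (n + 2) = 4 * 2 ^ n := by ring
    omega

/-- The repunit `(b ^ (k + 1) - 1) / (b - 1)` of length `k + 1` is at least its leading
term `b ^ k`. -/
theorem pow_le_repunit (b k : ℕ) (hb : 2 ≤ b) : b ^ k ≤ (b ^ (k + 1) - 1) / (b - 1) := by
  rw [Nat.le_div_iff_mul_le (by omega), pow_succ, Nat.mul_sub, mul_one]
  have : 0 < b ^ k := by positivity
  omega

theorem stmt_7 (b n1 n2 n3 l1 l2 l3 d1 d2 d3 : ℕ) (hb : 2 ≤ b)
    (hsol : SatisfiesEq1 b n1 n2 n3 l1 l2 l3 d1 d2 d3) :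
    l1 + l2 + l3 < n1 + 2 := by
  obtain ⟨h32, h21, hl1, -, -, -, -, -, hd1, heq⟩ := hsol
  obtain ⟨k, rfl⟩ : ∃ k, l1 = k + 1 := ⟨l1 - 1, by omega⟩
  have hlow : 2 ^ (k + (l2 + l3)) ≤
      d1 * ((b ^ (k + 1) - 1) / (b - 1)) * b ^ (l2 + l3) := by
    calc 2 ^ (k + (l2 + l3)) ≤ b ^ (k + (l2 + l3)) := Nat.pow_le_pow_left hb _
      _ = 1 * b ^ k * b ^ (l2 + l3) := by rw [one_mul, pow_add]
      _ ≤ _ := Nat.mul_le_mul_right _ (Nat.mul_le_mul hd1 (pow_le_repunit b k hb))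
  have hf2 := Nat.fib_mono h21
  have hf3 := Nat.fib_mono (h32.trans h21)
  have hf := two_mul_fib_le_two_pow n1
  have hpos : 0 < 2 ^ n1 := by positivity
  have hlt : 2 ^ (k + (l2 + l3)) < 2 ^ (n1 + 1) := by
    rw [pow_succ 2 n1]
    omega
  have := (Nat.pow_lt_pow_iff_right (by norm_num)).1 hlt
  omega
end

section
/- Let l ≥ 1 be an integer and let H and L be real numbers with L > 1. If H > (4l^2)^l and H > L/(log L)^l, then L < 2^l · H · (log H)^l. -/
open Real

/-!
Put `y = log L` and `h = log H`. The second hypothesis says `L < H * y ^ l`, so the claim is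
immediate when `y ≤ 2 * h`. Otherwise, taking logarithms, `y < h + l * log y < y / 2 + l * log y`,
i.e. `y < 2 * l * log y`. But the first hypothesis gives `h > 2 * l * log (2 * l)`, hence
`y > 4 * l * log (2 * l)`, and in that range `2 * l * log y ≤ y` (`two_mul_log_le`), a contradiction.
-/

/-- The tangent line of `log` at `a = 4 * l * log (2 * l)` bounds `log y`; the constant term is
controlled by `a ≤ (2 * l) ^ 2`, and the slope `1 / a` by `2 * l ≤ a`. -/
lemma two_mul_log_le (l : ℝ) (hl : 1 ≤ l) (y : ℝ) (hy : 4 * l * log (2 * l) < y) :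
    2 * l * log y ≤ y := by
  have hl0 : 0 < l := by linarith
  have h2 : log (2 * l) = log 2 + log l := log_mul (by norm_num) hl0.ne'
  have hlog2 := Real.log_two_gt_d9
  have hlog2' := Real.log_two_lt_d9
  have hm1 : log (2 * l) ≤ l := by
    have := log_le_sub_one_of_pos hl0
    linarith
  have hm2 : 1 / 2 ≤ log (2 * l) := by
    have := log_nonneg hl
    linarith
  set m := log (2 * l) with hm
  set a := 4 * l * m with ha
  have ha2 : 2 * l ≤ a := by nlinarith
  have ha0 : 0 < a := by linarith
  have hy0 : 0 < y := by linarith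
  have hloga : log a ≤ 2 * m := by
    have h1 : log a ≤ log ((2 * l) ^ 2) := log_le_log ha0 (by nlinarith)
    rw [log_pow] at h1
    exact_mod_cast h1
  have htan : log y - log a ≤ y / a - 1 := by
    rw [← log_div hy0.ne' ha0.ne']
    exact log_le_sub_one_of_pos (div_pos hy0 ha0)
  have hslope : 2 * l * (y / a - 1) ≤ y - a := by
    have h1 : y - a = a * (y / a - 1) := by field_simp
    have h3 : 0 ≤ y / a - 1 := by
      rw [sub_nonneg, one_le_div ha0]
      exact hy.le
    rw [h1]
    exact mul_le_mul_of_nonneg_right ha2 h3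
  calc 2 * l * log y ≤ 2 * l * (2 * m + (y / a - 1)) := by
        apply mul_le_mul_of_nonneg_left _ (by linarith)
        linarith
    _ ≤ y := by linarith

theorem stmt_8 (l : ℕ) (hl : 1 ≤ l) (H L : ℝ) (hL : 1 < L)
    (hH1 : (4 * (l : ℝ) ^ 2) ^ l < H)
    (hH2 : L / (Real.log L) ^ l < H) :
    L < 2 ^ l * H * (Real.log H) ^ l := by
  have hl' : (1 : ℝ) ≤ l := by exact_mod_cast hl
  have hl0 : (0 : ℝ) < l := by linarith
  have hy0 : 0 < log L := log_pos hL
  have hpow : 0 < (4 * (l : ℝ) ^ 2) ^ l := by positivity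
  have hH0 : 0 < H := hpow.trans hH1
  have hLlt : L < H * log L ^ l := (div_lt_iff₀ (pow_pos hy0 l)).1 hH2
  have hh : 2 * l * log (2 * l) < log H := by
    have h1 := log_lt_log hpow hH1
    rw [log_pow, show 4 * (l : ℝ) ^ 2 = (2 * l) ^ 2 by ring, log_pow] at h1
    push_cast at h1
    linarith
  rcases le_or_gt (log L) (2 * log H) with hle | hgt
  · calc L < H * log L ^ l := hLlt
      _ ≤ H * (2 * log H) ^ l := by gcongr
      _ = 2 ^ l * H * log H ^ l := by rw [mul_pow]; ring
  · exfalso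
    have h1 := log_lt_log (by linarith) hLlt
    rw [log_mul hH0.ne' (pow_pos hy0 l).ne', log_pow] at h1
    have h2 := two_mul_log_le l hl' (log L) (by linarith)
    linarith
end

section
/- Let M be a positive integer, let τ be an irrational real number, and let A, B, μ be real numbers with A > 0 and B > 1. Let q be a positive integer with q > 6M such that ‖qτ‖ < 1/q (this holds when q is the denominator of a continued-fraction convergent p/q of τ). Set ε := ‖μq‖ − M·‖τq‖, where ‖x‖ denotes the distance from the real number x to the nearest integer. If ε > 0, then there is no solution of the inequality 0 < |uτ − v + μ| < A·B^{−w} in positive integers u, v, w with u ≤ M and w ≥ log(Aq/ε)/log B. -/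
open Real


/-!
Let `p` be the integer nearest to `τ q`. Multiplying the linear form by `q` gives
`q (u τ - v + μ) = (μ q - (q v - u p)) + u (τ q - p)`, so for `u ≤ M`
`q |u τ - v + μ| ≥ ‖μ q‖ - u ‖τ q‖ ≥ ε`. On the other hand `w ≥ log (A q / ε) / log B` means
`B ^ w ≥ A q / ε`, that is `q A B ^ (-w) ≤ ε`, which contradicts `|u τ - v + μ| < A B ^ (-w)`.
-/

/-- The distance from a real number to the nearest integer. -/
noncomputable def distNearestInt (x : ℝ) : ℝ := |x - round x|

theorem stmt_9 (M : ℕ) (hM : 0 < M) (τ : ℝ) (hτ : Irrational τ)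
    (A B μ : ℝ) (hA : 0 < A) (hB : 1 < B)
    (q : ℕ) (hq : 0 < q) (hq6 : 6 * M < q)
    (hconv : distNearestInt ((q : ℝ) * τ) < 1 / (q : ℝ))
    (ε : ℝ) (hε : ε = distNearestInt (μ * (q : ℝ)) - (M : ℝ) * distNearestInt (τ * (q : ℝ)))
    (hεpos : 0 < ε) :
    ¬ ∃ u v w : ℕ, 0 < u ∧ 0 < v ∧ 0 < w ∧ u ≤ M ∧
      Real.log (A * (q : ℝ) / ε) / Real.log B ≤ (w : ℝ) ∧
      0 < |(u : ℝ) * τ - (v : ℝ) + μ| ∧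
      |(u : ℝ) * τ - (v : ℝ) + μ| < A * B ^ (-(w : ℝ)) := by
  rintro ⟨u, v, w, -, -, -, huM, hw, -, hlt⟩
  have hq0 : (0 : ℝ) < q := by exact_mod_cast hq
  have hB0 : 0 < B := by linarith
  have huM' : (u : ℝ) ≤ M := by exact_mod_cast huM
  have hAq : 0 < A * q / ε := by positivity
  have hpow : A * q / ε ≤ B ^ (w : ℝ) := by
    rw [div_le_iff₀ (Real.log_pos hB)] at hw
    rwa [Real.le_rpow_iff_log_le hAq hB0]
  have hlower : ε ≤ q * |(u : ℝ) * τ - v + μ| := by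
    -- The nearest integer to `μ q` is at least as close as `q v - u p`, `p = round (τ q)`.
    have hround := round_le (μ * q) ((q : ℤ) * v - u * round (τ * q))
    push_cast at hround
    have htri : |μ * q - (q * v - u * (round (τ * q) : ℝ))|
        ≤ q * |(u : ℝ) * τ - v + μ| + u * |τ * q - round (τ * q)| := by
      have habs := abs_sub ((q : ℝ) * (u * τ - v + μ)) (u * (τ * q - round (τ * q)))
      rw [abs_mul, abs_mul, Nat.abs_cast, Nat.abs_cast] at habs
      refine le_trans (le_of_eq ?_) habs
      congr 1
      ring
    have hmono := mul_le_mul_of_nonneg_right huM' (abs_nonneg (τ * q - round (τ * q)))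
    rw [hε]
    unfold distNearestInt
    linarith
  have hupper : q * |(u : ℝ) * τ - v + μ| < q * (A * B ^ (-(w : ℝ))) :=
    mul_lt_mul_of_pos_left hlt hq0
  have hle : q * (A * B ^ (-(w : ℝ))) ≤ ε := by
    rw [Real.rpow_neg hB0.le, ← div_eq_mul_inv, ← mul_div_assoc,
      div_le_iff₀ (Real.rpow_pos_of_pos hB0 _)]
    rw [div_le_iff₀ hεpos] at hpow
    linarith
  linarith
end

section
/- Let b ≥ 2 be an integer, let d be an integer with 1 ≤ d ≤ b − 1, let m be a positive integer, and let n_1 ≥ n_2 ≥ 2 be integers. Then (b − 1)·(α^{n_1} + α^{n_2}) ≠ √5 · d · b^m. -/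
open Real

/-!
Every power of the golden ratio is `p + q √5` with `p > 0` and `q ≥ 0` rational. Hence the
rational part of `(b - 1)(α ^ n1 + α ^ n2)` in the basis `1, √5` is positive, whereas the rational
part of `√5 d b ^ m` is zero. Since `√5` is irrational, the two numbers differ. Comparing
rational parts amounts to applying the nontrivial automorphism of `ℚ(√5)`, and makes size
estimates for the conjugates unnecessary.
-/

theorem goldenPow_eq_add_mul_sqrt_five (n : ℕ) :
    ∃ p q : ℚ, 0 < p ∧ 0 ≤ q ∧ ((1 + Real.sqrt 5) / 2) ^ n = (p : ℝ) + q * Real.sqrt 5 := by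
  induction n with
  | zero => exact ⟨1, 0, by norm_num, le_rfl, by simp⟩
  | succ n ih =>
    obtain ⟨p, q, hp, hq, h⟩ := ih
    refine ⟨(p + 5 * q) / 2, (p + q) / 2, by positivity, by positivity, ?_⟩
    have h5 : Real.sqrt 5 * Real.sqrt 5 = 5 := Real.mul_self_sqrt (by norm_num)
    rw [pow_succ, h]
    push_cast
    linear_combination (q / 2 : ℝ) * h5

theorem stmt_11 (b d m n1 n2 : ℕ) (hb : 2 ≤ b) (hd1 : 1 ≤ d) (hd2 : d ≤ b - 1)
    (hm : 0 < m) (hn2 : 2 ≤ n2) (hn12 : n2 ≤ n1) :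
    ((b : ℝ) - 1) * (((1 + Real.sqrt 5) / 2) ^ n1 + ((1 + Real.sqrt 5) / 2) ^ n2) ≠
      Real.sqrt 5 * (d : ℝ) * (b : ℝ) ^ m := by
  intro heq
  obtain ⟨p₁, q₁, hp₁, -, h₁⟩ := goldenPow_eq_add_mul_sqrt_five n1
  obtain ⟨p₂, q₂, hp₂, -, h₂⟩ := goldenPow_eq_add_mul_sqrt_five n2
  have hb' : (0 : ℚ) < (b : ℚ) - 1 := by
    have : (2 : ℚ) ≤ b := by exact_mod_cast hb
    linarith
  have hirr : Irrational (Real.sqrt 5) := by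
    simpa using Nat.Prime.irrational_sqrt (show Nat.Prime 5 by norm_num)
  have hr : 0 < ((b : ℚ) - 1) * (p₁ + p₂) := by positivity
  generalize hrdef : ((b : ℚ) - 1) * (p₁ + p₂) = r at hr
  obtain ⟨s, hs⟩ : ∃ s : ℚ, s = d * (b : ℚ) ^ m - ((b : ℚ) - 1) * (q₁ + q₂) := ⟨_, rfl⟩
  have key : (r : ℝ) = s * Real.sqrt 5 := by
    rw [← hrdef, hs]
    rw [h₁, h₂] at heq
    push_cast
    linear_combination heq
  have hs0 : s ≠ 0 := by
    rintro rfl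
    have : (r : ℝ) = 0 := by simpa using key
    exact hr.ne' (by exact_mod_cast this)
  refine hirr ⟨r / s, ?_⟩
  have hs0' : (s : ℝ) ≠ 0 := by exact_mod_cast hs0
  push_cast
  rw [key]
  field_simp
end

section
/- The largest Fibonacci number that is a concatenation of three repdigits in base 10 is F_{22} = 17711. That is: 17711 = F_{22}, 17711 is a concatenation of three repdigits in base 10 (its decimal expansion is 17711, with d_1 = 1, ℓ_1 = 1, d_2 = 7, ℓ_2 = 2, d_3 = 1, ℓ_3 = 2), and every Fibonacci number F_n that is a concatenation of three repdigits in base 10 satisfies F_n ≤ 17711. -/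
/-!
If `F_n` consists of three decimal runs ending at the places `x > y > z > 0`, then
`9 F_n = d1 10^x + (d2 - d1) 10^y + (d3 - d2) 10^z - d3`. Hence `9 F_n` is congruent modulo `5^z`,
`5^y` and `5^x` to integers of size at most `9`, `9 * 10^z` and `9 * 10^y`, respectively.

*An absolute bound.* `five_adic_bound` shows that `9 F_n ≡ C` modulo `5^e` forces
`e ≪ (log |C|)^2 (log n)^4`, unless `n` itself is about `log |C| log n` or smaller. It takes the
place of a lower bound for `5`-adic linear forms in logarithms and is proved with an interpolation
determinant. Let `w` be the golden ratio and let `s` be the root of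
`s² = 81 (-1)^n + √5 C s` which is close to `9 w^n` in the `5`-adic sense. The monomials `X^i Y^j`
are evaluated at the points `X = u + v n`, `Y = (w^u (s/9)^v)^4`. A zero estimate
(`zero_estimate`) gives a nonzero maximal minor. If `s` were `9 w^n`, all entries would be functions
`X^i w^(4jX)` of one integer variable, with `w^4 ≡ 1` modulo the prime `3w + 1` above `5`, and the
minor would be divisible by a high power of that prime (`pow_dvd_det`); so it is divisible by it as
soon as `s ≡ 9 w^n` to high order. This contradicts the size of its norm. Applying the bound to the
ends of the three runs in turn gives `n ≪ (log n)^28` and so `n < 2^530`.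

*Reduction.* On each class modulo `4` the map `n ↦ F_n` is injective modulo `5^E` up to the period
`4 * 5^E` (`fib_five_adic_injective`), so the congruences `9 F_n ≡ -d3` modulo `5^E` can be solved
by Hensel lifting; for `E = 230` there is no solution with `1100 ≤ n < 2^530`, whence `z < 230`.
The leading run is controlled by the linear form `n log φ - x log 10 + log (9 / (√5 d1))`:
Baker–Davenport reduction yields `x - y ≤ 163` (`leading_run_bound`). With these two facts the
`5`-adic bound is needed only once, for `y`, and yields `n < 2^87`; repeating the lifting and the
bound yields `n < 2^72`. Now the lifting can be done for all possible pairs of last two runs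
(`yCheck`); it shows `y < 36`, so `x < 199` and `n < 1100`. The finitely many remaining
Fibonacci numbers are inspected directly (`not_hasRuns_fib`).
-/

open Real

/-- `N` is a concatenation of three repdigits in base `b`. -/
def IsConcatThreeRepdigits (b N : ℕ) : Prop :=
  ∃ d1 d2 d3 l1 l2 l3 : ℕ,
    1 ≤ d1 ∧ d1 < b ∧ d2 < b ∧ d3 < b ∧
    1 ≤ l1 ∧ 1 ≤ l2 ∧ 1 ≤ l3 ∧
    N = d1 * ((b ^ l1 - 1) / (b - 1)) * b ^ (l2 + l3) +
        d2 * ((b ^ l2 - 1) / (b - 1)) * b ^ l3 +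
        d3 * ((b ^ l3 - 1) / (b - 1))

/-! ### Divisibility of interpolation determinants -/

/-- If `y ≡ 1` modulo `p`, each forward difference gains a factor `p` on `X ^ i * y ^ X`, except
that up to `i` of them may be spent on lowering the degree of the polynomial factor. -/
lemma pow_dvd_fwdDiff {R : Type*} [CommRing R] {p y : R} (hp : p ∣ y - 1) (l : ℕ) :
    ∀ i x : ℕ, p ^ (l - i) ∣ ((fwdDiff 1)^[l] (fun X : ℕ => (X : R) ^ i * y ^ X)) x := by
  induction l with
  | zero => intro i x; simp
  | succ l ih =>
    intro i x
    have key : (fwdDiff 1 (fun X : ℕ => (X : R) ^ i * y ^ X)) =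
        (y - 1) • (fun X : ℕ => (X : R) ^ i * y ^ X) +
        ∑ k ∈ Finset.range i, (y * (i.choose k : R)) • (fun X : ℕ => (X : R) ^ k * y ^ X) := by
      funext X
      simp only [fwdDiff, Pi.add_apply, Pi.smul_apply, Finset.sum_apply, smul_eq_mul]
      push_cast
      rw [add_pow, Finset.sum_range_succ, pow_succ y X]
      simp only [one_pow, Nat.choose_self, Nat.cast_one, Nat.sub_self, mul_one]
      have : ∑ k ∈ Finset.range i, y * (i.choose k : R) * ((X : R) ^ k * y ^ X) =
          (∑ k ∈ Finset.range i, (X : R) ^ k * (i.choose k : R)) * (y ^ X * y) := by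
        rw [Finset.sum_mul]
        exact Finset.sum_congr rfl fun k _ => by ring
      rw [this]
      ring
    rw [Function.iterate_succ_apply, key, fwdDiff_iter_add, fwdDiff_iter_const_smul,
      fwdDiff_iter_finsetSum]
    simp only [Pi.add_apply, Pi.smul_apply, Finset.sum_apply, smul_eq_mul,
      fwdDiff_iter_const_smul]
    refine dvd_add ?_ (Finset.dvd_sum fun k hk => ?_)
    · refine (pow_dvd_pow p (show l + 1 - i ≤ 1 + (l - i) by omega)).trans ?_
      rw [pow_add, pow_one]
      exact mul_dvd_mul hp (ih i x)
    · have := Finset.mem_range.1 hk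
      exact ((pow_dvd_pow p (show l + 1 - i ≤ l - k by omega)).trans (ih k x)).mul_left _

lemma sum_range_card_le (s : Finset ℕ) : ∑ l ∈ Finset.range s.card, l ≤ ∑ l ∈ s, l := by
  induction s using Finset.induction_on_max with
  | empty => simp
  | insert a s ha ih =>
    have hna : a ∉ s := fun h => lt_irrefl _ (ha a h)
    rw [Finset.card_insert_of_notMem hna, Finset.sum_range_succ, Finset.sum_insert hna]
    have : s.card ≤ a := by
      have : s ⊆ Finset.range a := fun x hx => Finset.mem_range.2 (ha x hx)
      simpa using Finset.card_le_card this
    omega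

/-- Divisibility of an interpolation determinant. Each column is expanded in its Newton series in
the binomial coefficients `(X a).choose l`; by multilinearity only the choices of pairwise distinct
orders `l` for the columns survive, and the coefficient of order `l` in column `c` is divisible by
`p ^ (l - i c)`. The sum of distinct orders is at least `0 + 1 + ⋯ + (card ι - 1)`. -/
lemma pow_dvd_det {R : Type*} [CommRing R] {ι : Type*} [Fintype ι] [DecidableEq ι] {p : R}
    (y : ι → R) (hy : ∀ c, p ∣ y c - 1) (i X : ι → ℕ) (v : ℕ)
    (hv : v + ∑ c, i c ≤ ∑ l ∈ Finset.range (Fintype.card ι), l) :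
    p ^ v ∣ (Matrix.of fun a c => (X a : R) ^ i c * y c ^ X a).det := by
  obtain ⟨T, hT⟩ : ∃ T, ∀ a, X a < T :=
    ⟨(∑ a, X a) + 1, fun a => Nat.lt_succ_of_le
      (Finset.single_le_sum (f := X) (fun _ _ => Nat.zero_le _) (Finset.mem_univ a))⟩
  let A : Fin T → ι → R := fun l c =>
    ((fwdDiff 1)^[(l : ℕ)] (fun X : ℕ => (X : R) ^ i c * y c ^ X)) 0
  have hM : (Matrix.of fun a c => (X a : R) ^ i c * y c ^ X a).det =
      Matrix.detRowAlternating (fun c => ∑ l : Fin T, A l c • (fun a => ((X a).choose l : R))) := by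
    rw [← Matrix.det_transpose]
    change Matrix.det _ = Matrix.det _
    congr 1
    funext c a
    simp only [Matrix.transpose_apply, Matrix.of_apply, Finset.sum_apply, Pi.smul_apply,
      smul_eq_mul]
    have h := shift_eq_sum_fwdDiff_iter (1 : ℕ) (fun X : ℕ => (X : R) ^ i c * y c ^ X) (X a) 0
    simp only [zero_add, smul_eq_mul, mul_one, nsmul_eq_mul] at h
    rw [h, Finset.sum_fin_eq_sum_range]
    refine Finset.sum_subset_zero_on_sdiff
      (fun l hl => Finset.mem_range.2 (by have := Finset.mem_range.1 hl; have := hT a; omega))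
      (fun l hl => ?_) (fun l hl => ?_)
    · simp only [Finset.mem_sdiff, Finset.mem_range, not_lt] at hl
      rw [dif_pos hl.1, Nat.choose_eq_zero_of_lt (by simp; omega)]
      simp
    · have h1 := Finset.mem_range.1 hl
      rw [dif_pos (by have := hT a; omega)]
      exact mul_comm _ _
  rw [hM, ← AlternatingMap.coe_multilinearMap, MultilinearMap.map_sum]
  refine Finset.dvd_sum fun f _ => ?_
  rw [AlternatingMap.coe_multilinearMap]
  by_cases hf : Function.Injective f
  · rw [AlternatingMap.map_smul_univ]
    refine Dvd.dvd.mul_right ?_ _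
    have h1 : p ^ (∑ c, ((f c : ℕ) - i c)) ∣ ∏ c, A (f c) c := by
      rw [← Finset.prod_pow_eq_pow_sum]
      exact Finset.prod_dvd_prod_of_dvd _ _ fun c _ => pow_dvd_fwdDiff (hy c) _ _ _
    refine (pow_dvd_pow p ?_).trans h1
    have h2 : ∑ l ∈ Finset.range (Fintype.card ι), l ≤ ∑ c, (f c : ℕ) := by
      have hinj : Function.Injective fun c => (f c : ℕ) := Fin.val_injective.comp hf
      have := sum_range_card_le (Finset.univ.image fun c => (f c : ℕ))
      rwa [Finset.card_image_of_injective _ hinj, Finset.sum_image hinj.injOn,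
        Finset.card_univ] at this
    have h3 : ∑ c, (f c : ℕ) ≤ ∑ c, ((f c : ℕ) - i c) + ∑ c, i c := by
      rw [← Finset.sum_add_distrib]
      exact Finset.sum_le_sum fun c _ => by omega
    omega
  · rw [AlternatingMap.map_smul_univ]
    simp only [Function.Injective, not_forall] at hf
    obtain ⟨a, b, hab, hne⟩ := hf
    rw [AlternatingMap.map_eq_zero_of_eq _ _ (i := a) (j := b) (by simp [hab]) hne]
    simp

/-! ### Zero estimate -/

open Polynomial in
/-- Zero estimate: an exponential polynomial `∑ p_j(X) Y ^ j` which vanishes at the points `(u + v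
n, θ ^ u ρ ^ v)` is zero if there are enough points. Otherwise the matrix of the `L` shifts `u ↦ u +
r` is singular at every such abscissa `u + v n`, so its determinant, a polynomial of degree at most
`L (K - 1)` whose leading coefficient is a nonzero multiple of a Vandermonde determinant in the
powers of `θ`, has at least `R V` roots. A vanishing `p j` is replaced by `1` in the matrix, which
keeps the determinant nonzero; the kernel vector has zero entry there. -/
lemma zero_estimate {F : Type*} [Field F] [CharZero F] {θ ρ : F}
    (hθ : Function.Injective fun r : ℕ => θ ^ r) (hθ0 : θ ≠ 0) (hρ : ρ ≠ 0)
    {K L R V n : ℕ} (hRn : R ≤ n) (hRV : K * L ≤ R * V) (p : Fin L → F[X])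
    (hp : ∀ j, (p j).natDegree < K)
    (h : ∀ u < R + L, ∀ v < V,
      ∑ j : Fin L, (p j).eval ((u + v * n : ℕ) : F) * (θ ^ u * ρ ^ v) ^ (j : ℕ) = 0) :
    ∀ j, p j = 0 := by
  classical
  by_contra! hne
  obtain ⟨j0, hj0⟩ := hne
  let q : Fin L → F[X] := fun j => if p j = 0 then 1 else p j
  have hq0 : ∀ j, q j ≠ 0 := by
    intro j; simp only [q]; split_ifs with h0
    · exact one_ne_zero
    · exact h0
  have hqd : ∀ j, (q j).natDegree ≤ K - 1 := by
    intro j; have := hp j; simp only [q]; split_ifs with h0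
    · simp
    · omega
  let A : Matrix (Fin L) (Fin L) F[X] := Matrix.of fun r j =>
    (q j).comp (X + C ((r : ℕ) : F)) * C (θ ^ ((r : ℕ) * (j : ℕ)))
  have hAne : ∀ r j, A r j ≠ 0 := by
    intro r j
    refine mul_ne_zero ?_ (by simp [hθ0])
    change ¬ ((q j).comp (X + C ((r : ℕ) : F)) = 0)
    rw [comp_eq_zero_iff]
    rintro (h1 | h1)
    · exact hq0 j h1
    · have := congrArg natDegree h1.2
      rw [natDegree_X_add_C, natDegree_C] at this
      exact one_ne_zero this
  have hAdeg : ∀ r j, (A r j).natDegree = (q j).natDegree := by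
    intro r j
    simp only [A, Matrix.of_apply]
    rw [natDegree_mul_C (by simp [hθ0]), natDegree_comp, natDegree_X_add_C, mul_one]
  have hAlc : ∀ r j, (A r j).leadingCoeff = (q j).leadingCoeff * θ ^ ((r : ℕ) * (j : ℕ)) := by
    intro r j
    simp only [A, Matrix.of_apply]
    rw [leadingCoeff_mul, leadingCoeff_comp (by rw [natDegree_X_add_C]; exact one_ne_zero), leadingCoeff_X_add_C, leadingCoeff_C]
    simp
  have hprod : ∀ σ : Equiv.Perm (Fin L), (∏ j, A (σ j) j).natDegree = ∑ j, (q j).natDegree := by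
    intro σ
    rw [natDegree_prod _ _ fun j _ => hAne _ _]
    exact Finset.sum_congr rfl fun j _ => hAdeg _ _
  have hdetdeg : A.det.natDegree ≤ ∑ j, (q j).natDegree := by
    rw [Matrix.det_apply]
    refine natDegree_sum_le_of_forall_le _ _ fun σ _ => ?_
    refine (natDegree_smul_le _ _).trans ?_
    rw [hprod σ]
  have hcoeff : A.det.coeff (∑ j, (q j).natDegree) ≠ 0 := by
    have : A.det.coeff (∑ j, (q j).natDegree) =
        (Matrix.of fun r j : Fin L => (q j).leadingCoeff *
          Matrix.vandermonde (fun r : Fin L => θ ^ (r : ℕ)) r j).det := by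
      rw [Matrix.det_apply', Matrix.det_apply', finsetSum_coeff]
      refine Finset.sum_congr rfl fun σ _ => ?_
      rw [← C_eq_intCast, coeff_C_mul]
      congr 1
      rw [← hprod σ, coeff_natDegree, leadingCoeff_prod]
      refine Finset.prod_congr rfl fun j _ => ?_
      rw [hAlc]
      simp [Matrix.vandermonde_apply, pow_mul]
    rw [this, Matrix.det_mul_row]
    refine mul_ne_zero (Finset.prod_ne_zero_iff.2 fun j _ => leadingCoeff_ne_zero.2 (hq0 j)) ?_
    rw [Matrix.det_vandermonde_ne_zero_iff]
    intro a b hab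
    exact Fin.ext (hθ hab)
  have hdet0 : A.det ≠ 0 := fun h0 => hcoeff (by rw [h0, coeff_zero])
  have hroot : ∀ u < R, ∀ v < V, A.det.eval ((u + v * n : ℕ) : F) = 0 := by
    intro u hu v hv
    rw [← coe_evalRingHom, RingHom.map_det]
    rw [← Matrix.exists_mulVec_eq_zero_iff]
    refine ⟨fun j => if p j = 0 then 0 else (θ ^ u * ρ ^ v) ^ (j : ℕ), ?_, ?_⟩
    · intro h0
      have := congrFun h0 j0
      simp [hj0, hθ0, hρ] at this
    · funext r
      have h1 := h (u + r) (by omega) v hv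
      refine Eq.trans ?_ h1
      simp only [Matrix.mulVec, dotProduct, RingHom.mapMatrix_apply, Matrix.map_apply]
      refine Finset.sum_congr rfl fun j _ => ?_
      by_cases hpj : p j = 0
      · simp [hpj]
      · simp only [hpj, if_false, A, q, Matrix.of_apply, coe_evalRingHom, eval_mul, eval_comp,
          eval_add, eval_X, eval_C]
        push_cast
        rw [show (u : F) + v * n + (r : ℕ) = u + (r : ℕ) + v * n by ring]
        ring
  have hcard : R * V ≤ A.det.natDegree := by
    let S : Finset F := (Finset.range R ×ˢ Finset.range V).image
      fun x => ((x.1 + x.2 * n : ℕ) : F)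
    have hS : S.card = R * V := by
      rw [Finset.card_image_of_injOn]
      · simp
      · rintro ⟨a, b⟩ hab ⟨c, d⟩ hcd heq
        simp only [Finset.coe_product, Finset.coe_range, Set.mem_prod, Set.mem_Iio] at hab hcd
        have heq : a + b * n = c + d * n := by
          have : ((a + b * n : ℕ) : F) = ((c + d * n : ℕ) : F) := heq
          exact_mod_cast this
        have h1 : a = c := by
          have := congrArg (· % n) heq
          simpa [Nat.add_mul_mod_self_right, Nat.mod_eq_of_lt (show a < n by omega),
            Nat.mod_eq_of_lt (show c < n by omega)] using this
        subst h1
        have h2 : b * n = d * n := by omega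
        rw [Nat.eq_of_mul_eq_mul_right (by omega) h2]
    rw [← hS]
    refine (card_le_degree_of_subset_roots (p := A.det) (Z := S) ?_)
    intro x hx
    obtain ⟨⟨u, v⟩, huv, rfl⟩ := Finset.mem_image.1 (show x ∈ S from hx)
    simp only [Finset.mem_product, Finset.mem_range] at huv
    rw [mem_roots hdet0]
    exact hroot u huv.1 v huv.2
  have h1 : ∑ j, (q j).natDegree ≤ L * (K - 1) := by
    refine (Finset.sum_le_sum fun j _ => hqd j).trans ?_
    simp
  have hK : 0 < K := by have := hp j0; omega
  have hL : 0 < L := by have := j0.2; omega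
  have : L * (K - 1) < K * L := by
    rw [mul_comm K L]
    exact Nat.mul_lt_mul_of_pos_left (by omega) hL
  omega

/-- A matrix with trivial kernel has a nonzero maximal minor; `f` selects its rows. -/
lemma exists_det_ne_zero {F : Type*} [Field F] {P Q : Type*} [Fintype P] [Fintype Q]
    [DecidableEq Q] (M : Matrix P Q F) (hM : ∀ w, M.mulVec w = 0 → w = 0) :
    ∃ f : Q → P, (M.submatrix f id).det ≠ 0 := by
  have hinj : Function.Injective M.mulVecLin := by
    rw [← LinearMap.ker_eq_bot, LinearMap.ker_eq_bot']
    exact hM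
  have hrank : Module.finrank F (Submodule.span F (Set.range M.row)) = Fintype.card Q := by
    rw [← Matrix.rank_eq_finrank_span_row, Matrix.rank, LinearMap.finrank_range_of_inj hinj,
      Module.finrank_fintype_fun_eq_card]
  obtain ⟨κ, a, ha, hsp, hli⟩ := exists_linearIndependent' F M.row
  have : Finite κ := Finite.of_injective a ha
  have : Fintype κ := Fintype.ofFinite κ
  have hcard : Fintype.card κ = Fintype.card Q := by
    rw [← hrank, ← hsp, finrank_span_eq_card hli]
  let e : Q ≃ κ := Fintype.equivOfCardEq hcard.symm
  refine ⟨a ∘ e, ?_⟩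
  have h2 : LinearIndependent F (M.submatrix (a ∘ e) id).row := hli.comp e e.injective
  rw [Matrix.linearIndependent_rows_iff_isUnit, Matrix.isUnit_iff_isUnit_det] at h2
  exact h2.ne_zero

/-! ### The interpolation determinant -/

/-- The value of the monomial `X ^ i * Y ^ j` at `X = u + v n`, `Y = (w ^ u (s / 9) ^ v) ^ 4`,
multiplied by `9 ^ (4 (L - 1) v)` to clear denominators (for `j < L`). -/
def interpEntry {T : Type*} [CommRing T] (w s : T) (n L : ℕ) (u v i j : ℕ) : T :=
  ((u + v * n : ℕ) : T) ^ i * (w ^ 4) ^ (j * u) * s ^ (4 * (j * v)) * 9 ^ (4 * ((L - 1 - j) * v))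

lemma map_interpEntry {T W : Type*} [CommRing T] [CommRing W] (f : T →+* W) (w s : T)
    (n L u v i j : ℕ) :
    f (interpEntry w s n L u v i j) = interpEntry (f w) (f s) n L u v i j := by
  have h9 : f 9 = 9 := map_ofNat f 9
  simp [interpEntry, h9]

/-- The minor of the interpolation matrix of the monomials `X ^ i * Y ^ j` (`i < K`, `j < L`) whose
rows are the points `(u, v)` selected by `f`. -/
def interpDet {T : Type*} [CommRing T] (w s : T) (n : ℕ) {K L U V : ℕ}
    (f : Fin K × Fin L → Fin U × Fin V) : T :=
  (Matrix.of fun a c : Fin K × Fin L =>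
    interpEntry w s n L (f a).1 (f a).2 c.1 c.2).det

lemma map_interpDet {T W : Type*} [CommRing T] [CommRing W] (g : T →+* W) (w s : T)
    (n : ℕ) {K L U V : ℕ} (f : Fin K × Fin L → Fin U × Fin V) :
    g (interpDet w s n f) = interpDet (g w) (g s) n f := by
  rw [interpDet, RingHom.map_det, interpDet]
  congr 1
  ext a c
  simp [map_interpEntry]

/-- The zero estimate, restated as the existence of a nonvanishing interpolation determinant. -/
lemma exists_interpDet_ne_zero {F : Type*} [Field F] [CharZero F] (w s : F)
    (hw : Function.Injective fun r : ℕ => (w ^ 4) ^ r) (hw0 : w ≠ 0) (hs : s ≠ 0)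
    {K L R V n : ℕ} (hK : 0 < K) (hRn : R ≤ n) (hRV : K * L ≤ R * V) :
    ∃ f : Fin K × Fin L → Fin (R + L) × Fin V, interpDet w s n f ≠ 0 := by
  let M : Matrix (Fin (R + L) × Fin V) (Fin K × Fin L) F := Matrix.of fun a c =>
    (((a.1 : ℕ) + (a.2 : ℕ) * n : ℕ) : F) ^ (c.1 : ℕ) *
      ((w ^ 4) ^ (a.1 : ℕ) * ((s / 9) ^ 4) ^ (a.2 : ℕ)) ^ (c.2 : ℕ)
  obtain ⟨f, hf⟩ := exists_det_ne_zero M (by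
    intro x hx
    have hz := zero_estimate hw (pow_ne_zero 4 hw0)
      (pow_ne_zero 4 (div_ne_zero hs (by norm_num : (9 : F) ≠ 0))) hRn hRV
      (fun j => ∑ i : Fin K, Polynomial.C (x (i, j)) * Polynomial.X ^ (i : ℕ))
      (fun j => by
        refine lt_of_le_of_lt (Polynomial.natDegree_sum_le_of_forall_le (n := K - 1) _ _
          fun i _ => ?_) (by omega)
        exact (Polynomial.natDegree_C_mul_X_pow_le _ _).trans (by omega))
      (fun u hu v hv => by
        have h1 := congrFun hx (⟨u, hu⟩, ⟨v, hv⟩)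
        simp only [Matrix.mulVec, dotProduct, M, Matrix.of_apply, Pi.zero_apply] at h1
        rw [Fintype.sum_prod_type_right] at h1
        rw [← h1]
        refine Finset.sum_congr rfl fun j _ => ?_
        rw [Polynomial.eval_finsetSum, Finset.sum_mul]
        refine Finset.sum_congr rfl fun i _ => ?_
        simp only [Polynomial.eval_mul, Polynomial.eval_C, Polynomial.eval_pow, Polynomial.eval_X]
        ring)
    funext ⟨i, j⟩
    have h2 := congrArg (fun q => Polynomial.coeff q (i : ℕ)) (hz j)
    simp only [Polynomial.finsetSum_coeff, Polynomial.coeff_C_mul, Polynomial.coeff_X_pow,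
      Polynomial.coeff_zero] at h2
    rw [Finset.sum_eq_single i] at h2
    · simpa using h2
    · intro b _ hb
      have : (i : ℕ) ≠ (b : ℕ) := fun h => hb (Fin.ext h.symm)
      simp [this]
    · simp)
  refine ⟨f, ?_⟩
  have : interpDet w s n f = (Matrix.of fun a c : Fin K × Fin L =>
      (9 ^ (4 * ((L - 1) * ((f a).2 : ℕ))) : F) * (M.submatrix f id) a c).det := by
    rw [interpDet]
    congr 1
    ext a c
    simp only [Matrix.of_apply, interpEntry, M, Matrix.submatrix_apply, id]
    have hc := c.2.2
    have h9 : (9 : F) ^ (4 * ((L - 1) * ((f a).2 : ℕ))) =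
        9 ^ (4 * ((L - 1 - c.2) * ((f a).2 : ℕ))) * 9 ^ (4 * ((c.2 : ℕ) * ((f a).2 : ℕ))) := by
      rw [← pow_add, ← mul_add, ← add_mul]
      congr 3
      omega
    have hs9 : s ^ (4 * ((c.2 : ℕ) * ((f a).2 : ℕ))) =
        9 ^ (4 * ((c.2 : ℕ) * ((f a).2 : ℕ))) * (s / 9) ^ (4 * ((c.2 : ℕ) * ((f a).2 : ℕ))) := by
      rw [← mul_pow, mul_div_cancel₀ _ (by norm_num : (9 : F) ≠ 0)]
    rw [h9, hs9]
    simp only [mul_pow, ← pow_mul]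
    ring
  rw [this, Matrix.det_mul_column]
  exact mul_ne_zero (Finset.prod_ne_zero_iff.2 fun a _ => pow_ne_zero _ (by norm_num)) hf

/-- If `s = 9 w ^ n`, then `Y = w ^ (4 X)` at every interpolation point, so that all columns are
functions `X ^ i * (w ^ (4 j)) ^ X` of the single integer `X = u + v n`. As `w ^ 4 - 1 = 3 w + 1`,
the determinant is highly divisible by `3 w + 1`. -/
lemma pow_dvd_interpDet {W : Type*} [CommRing W] (w s : W) (n : ℕ) (hw : w ^ 2 = w + 1)
    (hs : s = 9 * w ^ n) {K L U V : ℕ} (f : Fin K × Fin L → Fin U × Fin V) (d : ℕ)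
    (hd : 2 * d + K * L * (K - 1) ≤ K * L * (K * L - 1)) :
    (3 * w + 1) ^ d ∣ interpDet w s n f := by
  have h4 : w ^ 4 = 3 * w + 2 := by linear_combination (w ^ 2 + w + 2) * hw
  have : interpDet w s n f = (Matrix.of fun a c : Fin K × Fin L =>
      (9 ^ (4 * ((L - 1) * ((f a).2 : ℕ))) : W) * (Matrix.of fun a c : Fin K × Fin L =>
        (((f a).1 + (f a).2 * n : ℕ) : W) ^ (c.1 : ℕ) *
          ((w ^ 4) ^ (c.2 : ℕ)) ^ ((f a).1 + (f a).2 * n : ℕ)) a c).det := by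
    rw [interpDet]
    congr 1
    ext a c
    simp only [Matrix.of_apply, interpEntry]
    have hc := c.2.2
    have h9 : (9 : W) ^ (4 * ((L - 1) * ((f a).2 : ℕ))) =
        9 ^ (4 * ((L - 1 - c.2) * ((f a).2 : ℕ))) * 9 ^ (4 * ((c.2 : ℕ) * ((f a).2 : ℕ))) := by
      rw [← pow_add, ← mul_add, ← add_mul]
      congr 3
      omega
    rw [h9, hs]
    simp only [mul_pow, ← pow_mul, pow_add]
    ring
  rw [this, Matrix.det_mul_column]
  refine Dvd.dvd.mul_left ?_ _
  refine pow_dvd_det (fun c : Fin K × Fin L => (w ^ 4) ^ (c.2 : ℕ)) (fun c => ?_)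
    (fun c => (c.1 : ℕ)) (fun a => ((f a).1 + (f a).2 * n : ℕ)) d ?_
  · have : w ^ 4 - 1 ∣ (w ^ 4) ^ (c.2 : ℕ) - 1 := by
      simpa using sub_dvd_pow_sub_pow (w ^ 4) 1 (c.2 : ℕ)
    rwa [show w ^ 4 - 1 = 3 * w + 1 by rw [h4]; ring] at this
  · have h1 := Finset.sum_range_id_mul_two (Fintype.card (Fin K × Fin L))
    have h2 : (∑ c : Fin K × Fin L, (c.1 : ℕ)) * 2 = K * L * (K - 1) := by
      rw [Fintype.sum_prod_type]
      simp only [Finset.sum_const, Finset.card_univ, Fintype.card_fin, smul_eq_mul]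
      rw [← Finset.mul_sum, Fin.sum_univ_eq_sum_range (fun i => i) K, mul_assoc,
        Finset.sum_range_id_mul_two]
      ring
    simp only [Fintype.card_prod, Fintype.card_fin] at h1 ⊢
    omega

/-- Archimedean size of the interpolation determinant, from the Leibniz expansion. -/
lemma norm_interpDet_le (w s : ℂ) (n m h : ℕ) {K L U V : ℕ}
    (f : Fin K × Fin L → Fin U × Fin V) (hw : ‖w ^ 4‖ ≤ 7) (hs : ‖s‖ ≤ 2 ^ h) (hh : 4 ≤ h)
    (hX : U + V * n ≤ 2 ^ m) (hN : K * L ≤ 2 ^ m) :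
    ‖interpDet w s n f‖ ^ 2 ≤ 2 ^ (K * L *
      (2 * m + m * (K - 1) + 3 * U * (L - 1) + 8 * (h * ((L - 1) * V)))) := by
  have hentry : ∀ a c : Fin K × Fin L, ‖interpEntry w s n L (f a).1 (f a).2 c.1 c.2‖ ≤
      2 ^ (m * (c.1 : ℕ) + 3 * U * (c.2 : ℕ) + 4 * (h * ((L - 1) * V))) := by
    intro a c
    have hu := (f a).1.2
    have hv := (f a).2.2
    have hc := c.2.2
    simp only [interpEntry, norm_mul, norm_pow, Complex.norm_natCast]
    have h1 : (((f a).1 + (f a).2 * n : ℕ) : ℝ) ^ (c.1 : ℕ) ≤ 2 ^ (m * (c.1 : ℕ)) := by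
      rw [pow_mul]
      refine pow_le_pow_left₀ (by positivity) ?_ _
      have : ((f a).1 + (f a).2 * n : ℕ) ≤ 2 ^ m := by
        refine le_trans ?_ hX
        have := Nat.mul_le_mul_right n hv.le
        omega
      exact_mod_cast this
    have h2 : (‖w‖ ^ 4) ^ ((c.2 : ℕ) * (f a).1) ≤ 2 ^ (3 * U * (c.2 : ℕ)) := by
      rw [norm_pow] at hw
      calc (‖w‖ ^ 4) ^ ((c.2 : ℕ) * (f a).1) ≤ (2 ^ 3 : ℝ) ^ ((c.2 : ℕ) * (f a).1) :=
            pow_le_pow_left₀ (by positivity) (by linarith) _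
        _ ≤ (2 ^ 3 : ℝ) ^ ((c.2 : ℕ) * U) :=
            pow_le_pow_right₀ (by norm_num) (Nat.mul_le_mul_left _ hu.le)
        _ = 2 ^ (3 * U * (c.2 : ℕ)) := by rw [← pow_mul]; congr 1; ring
    have h3 : ‖s‖ ^ (4 * ((c.2 : ℕ) * (f a).2)) * ‖(9 : ℂ)‖ ^ (4 * ((L - 1 - c.2) * (f a).2)) ≤
        2 ^ (4 * (h * ((L - 1) * V))) := by
      have h9 : ‖(9 : ℂ)‖ ≤ 2 ^ h := by
        have : (2 : ℝ) ^ 4 ≤ 2 ^ h := pow_le_pow_right₀ (by norm_num) hh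
        rw [show ‖(9 : ℂ)‖ = 9 by simp]
        linarith
      calc _ ≤ ((2 : ℝ) ^ h) ^ (4 * ((c.2 : ℕ) * (f a).2)) *
            ((2 : ℝ) ^ h) ^ (4 * ((L - 1 - c.2) * (f a).2)) := by gcongr
        _ = 2 ^ (4 * (h * ((L - 1) * (f a).2))) := by
            rw [← pow_add, ← pow_mul]
            congr 1
            have : L - 1 = c.2 + (L - 1 - c.2) := by omega
            conv_rhs => rw [this]
            ring
        _ ≤ _ := pow_le_pow_right₀ (by norm_num) (by gcongr)
    rw [pow_add, pow_add, mul_assoc (_ * _) (‖s‖ ^ _)]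
    gcongr
  have hdet : ‖interpDet w s n f‖ ≤ ((K * L).factorial : ℝ) * ∏ c : Fin K × Fin L,
      (2 : ℝ) ^ (m * (c.1 : ℕ) + 3 * U * (c.2 : ℕ) + 4 * (h * ((L - 1) * V))) := by
    rw [interpDet, Matrix.det_apply]
    refine (norm_sum_le _ _).trans ?_
    have : ∀ σ ∈ (Finset.univ : Finset (Equiv.Perm (Fin K × Fin L))),
        ‖Equiv.Perm.sign σ • ∏ c, (Matrix.of fun a c : Fin K × Fin L =>
          interpEntry w s n L (f a).1 (f a).2 c.1 c.2) (σ c) c‖ ≤ ∏ c : Fin K × Fin L,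
      (2 : ℝ) ^ (m * (c.1 : ℕ) + 3 * U * (c.2 : ℕ) + 4 * (h * ((L - 1) * V))) := by
      intro σ _
      have h1 : ∀ (z : ℂ), ‖Equiv.Perm.sign σ • z‖ = ‖z‖ := by
        intro z
        rcases Int.units_eq_one_or (Equiv.Perm.sign σ) with h | h <;> simp [h]
      rw [h1, norm_prod]
      exact Finset.prod_le_prod (fun _ _ => norm_nonneg _) fun c _ => hentry _ _
    refine (Finset.sum_le_card_nsmul _ _ _ this).trans ?_
    rw [Finset.card_univ, Fintype.card_perm, nsmul_eq_mul]
    simp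
  have hfac : ((K * L).factorial : ℝ) ≤ 2 ^ (m * (K * L)) := by
    rw [pow_mul]
    have : (K * L).factorial ≤ (2 ^ m) ^ (K * L) :=
      (Nat.factorial_le_pow _).trans (Nat.pow_le_pow_left hN _)
    exact_mod_cast this
  rw [Finset.prod_pow_eq_pow_sum] at hdet
  have hB := hdet.trans (mul_le_mul_of_nonneg_right hfac (by positivity))
  rw [← pow_add] at hB
  refine (pow_le_pow_left₀ (norm_nonneg _) hB 2).trans ?_
  rw [← pow_mul]
  refine le_of_eq (congrArg _ ?_)
  have h1 : (∑ c : Fin K × Fin L, (c.1 : ℕ)) * 2 = K * L * (K - 1) := by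
    rw [Fintype.sum_prod_type]
    simp only [Finset.sum_const, Finset.card_univ, Fintype.card_fin, smul_eq_mul]
    rw [← Finset.mul_sum, Fin.sum_univ_eq_sum_range (fun i => i) K, mul_assoc,
      Finset.sum_range_id_mul_two]
    ring
  have h2 : (∑ c : Fin K × Fin L, (c.2 : ℕ)) * 2 = K * L * (L - 1) := by
    rw [Fintype.sum_prod_type]
    simp only [Finset.sum_const, Finset.card_univ, Fintype.card_fin, smul_eq_mul]
    rw [Fin.sum_univ_eq_sum_range (fun i => i) L, mul_assoc,
      Finset.sum_range_id_mul_two]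
    ring
  rw [Finset.sum_add_distrib, Finset.sum_add_distrib, ← Finset.mul_sum, ← Finset.mul_sum]
  simp only [Finset.sum_const, Finset.card_univ, Fintype.card_prod, Fintype.card_fin, smul_eq_mul]
  linear_combination m * h1 + 3 * U * h2

/-! ### Golden integers -/

/-- The ring homomorphism from `R[ω]`, `ω² = a + b ω`, which extends `f` and sends `ω` to `x`. -/
def quadEval {R A : Type*} [CommRing R] [CommRing A] {a b : R} (f : R →+* A) (x : A)
    (hx : x * x = f a + f b * x) : QuadraticAlgebra R a b →+* A where
  toFun z := f z.re + f z.im * x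
  map_one' := by
    change f 1 + f 0 * x = 1
    simp
  map_zero' := by simp
  map_add' y z := by
    simp only [QuadraticAlgebra.re_add, QuadraticAlgebra.im_add, map_add]; ring
  map_mul' y z := by
    simp only [QuadraticAlgebra.re_mul, QuadraticAlgebra.im_mul, map_add, map_mul]
    linear_combination -(f y.im * f z.im) * hx

lemma quadEval_apply {R A : Type*} [CommRing R] [CommRing A] {a b : R} (f : R →+* A) (x : A)
    (hx : x * x = f a + f b * x) (z : QuadraticAlgebra R a b) :
    quadEval f x hx z = f z.re + f z.im * x := rfl

lemma quadEval_algebraMap {R A : Type*} [CommRing R] [CommRing A] {a b : R} (f : R →+* A) (x : A)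
    (hx : x * x = f a + f b * x) (r : R) :
    quadEval f x hx (algebraMap R (QuadraticAlgebra R a b) r) = f r := by
  simp [quadEval_apply]

lemma quad_omega_mul_omega {R : Type*} [CommRing R] {a b : R} :
    (⟨0, 1⟩ : QuadraticAlgebra R a b) * ⟨0, 1⟩ = algebraMap R (QuadraticAlgebra R a b) a +
      algebraMap R (QuadraticAlgebra R a b) b * ⟨0, 1⟩ := by
  ext <;> simp

/-- The two extensions of `f` to the quadratic algebra, obtained by sending `ω` to either root of
its defining equation; the norm is the product of the two images. -/
lemma exists_norm_eq_mul {R : Type*} [CommRing R] {a b : R} (f : R →+* ℂ) :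
    ∃ g₁ g₂ : QuadraticAlgebra R a b →+* ℂ, ∀ z, f z.norm = g₁ z * g₂ z := by
  obtain ⟨d, hd⟩ := IsAlgClosed.exists_pow_nat_eq (f b ^ 2 + 4 * f a) (n := 2) (by norm_num)
  refine ⟨quadEval f ((f b + d) / 2) (by linear_combination hd / 4),
    quadEval f ((f b - d) / 2) (by linear_combination hd / 4), fun z => ?_⟩
  rw [quadEval_apply, quadEval_apply, QuadraticAlgebra.norm_def]
  simp only [map_sub, map_add, map_mul]
  linear_combination (f z.im ^ 2 / 4) * hd

/-- The ring of integers `ℤ[w]`, `w² = w + 1`. -/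
abbrev GoldenInt : Type := QuadraticAlgebra ℤ 1 1

namespace GoldenInt

/-- The golden ratio. -/
def w : GoldenInt := ⟨0, 1⟩

lemma w_sq : w ^ 2 = w + 1 := by
  rw [pow_two]; ext <;> simp [w, QuadraticAlgebra.re_one, QuadraticAlgebra.im_one]

lemma eq_re_im (z : GoldenInt) : z = (z.re : GoldenInt) + (z.im : GoldenInt) * w := by
  ext <;> simp [w]

lemma norm_eq (z : GoldenInt) : z.norm = z.re ^ 2 + z.re * z.im - z.im ^ 2 := by
  rw [QuadraticAlgebra.norm_def]; ring

lemma norm_eq_zero {z : GoldenInt} (hz : z.norm = 0) : z = 0 := by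
  rw [norm_eq] at hz
  have h5 : (2 * z.re + z.im) ^ 2 = 5 * z.im ^ 2 := by linear_combination 4 * hz
  have him : z.im = 0 := by
    by_contra hne
    have : IsSquare (5 : ℚ) := by
      refine ⟨(2 * z.re + z.im) / z.im, ?_⟩
      have hq : (z.im : ℚ) ≠ 0 := by exact_mod_cast hne
      field_simp
      have : ((2 * z.re + z.im) ^ 2 : ℚ) = 5 * z.im ^ 2 := by exact_mod_cast h5
      linarith
    have h6 : IsSquare (5 : ℕ) := by
      rw [← Rat.isSquare_natCast_iff]; exact_mod_cast this
    obtain ⟨r, hr⟩ := h6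
    have : r < 3 := by nlinarith
    interval_cases r <;> omega
  rw [him] at h5
  have : z.re = 0 := by nlinarith
  ext <;> simp [him, this]

lemma w_pow (n : ℕ) : w ^ n = ⟨(Nat.fib (n + 1) : ℤ) - Nat.fib n, Nat.fib n⟩ := by
  induction n with
  | zero => ext <;> simp [QuadraticAlgebra.re_one, QuadraticAlgebra.im_one]
  | succ n ih =>
    rw [pow_succ, ih]
    have := Nat.fib_add_two (n := n)
    ext <;> simp [w, this]

lemma norm_w_pow (n : ℕ) : (w ^ n).norm = (-1) ^ n := by
  rw [map_pow, norm_eq]; simp [w]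

/-- The element `3 w + 1 = w ^ 4 - 1` generates the prime above `5`. -/
lemma norm_pi : (3 * w + 1 : GoldenInt).norm = -5 := by
  have h : (3 * w + 1 : GoldenInt) = ⟨1, 3⟩ := by rw [eq_re_im ⟨1, 3⟩]; push_cast; ring
  rw [norm_eq, h]; norm_num

lemma pi_sq : (3 * w + 1 : GoldenInt) ^ 2 = 5 * w ^ 4 := by
  have := w_sq
  linear_combination (9 - 5 * (w ^ 2 + w + 2)) * this

lemma w_unit : w * (w - 1) = 1 := by linear_combination w_sq

lemma pi_pow_dvd {d e : ℕ} (h : d ≤ 2 * e) : (3 * w + 1 : GoldenInt) ^ d ∣ 5 ^ e := by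
  refine (pow_dvd_pow _ h).trans ?_
  rw [pow_mul, pi_sq, mul_pow]
  refine ⟨((w - 1) ^ 4) ^ e, ?_⟩
  rw [mul_assoc, ← mul_pow (w ^ 4), ← mul_pow w, w_unit, one_pow, one_pow, mul_one]

end GoldenInt

lemma golden_pow_injective {z : ℂ} (hsq : z ^ 2 = z + 1) :
    Function.Injective fun r : ℕ => (z ^ 4) ^ r := by
  have h4 : z ^ 4 = 3 * z + 2 := by linear_combination (z ^ 2 + z + 2) * hsq
  have key : ∃ x : ℝ, z ^ 4 = (x : ℂ) ∧ 0 < x ∧ x ≠ 1 := by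
    have h5 : (0 : ℝ) ≤ 5 := by norm_num
    have hs : Real.sqrt 5 ^ 2 = 5 := Real.sq_sqrt h5
    have hl : 2.2 < Real.sqrt 5 := Real.lt_sqrt_of_sq_lt (by norm_num)
    have hu : Real.sqrt 5 < 2.3 := (Real.sqrt_lt' (by norm_num)).2 (by norm_num)
    have hfac : (z - ((1 + Real.sqrt 5) / 2 : ℝ)) * (z - ((1 - Real.sqrt 5) / 2 : ℝ)) = 0 := by
      have hsC : ((Real.sqrt 5 : ℝ) : ℂ) ^ 2 = 5 := by exact_mod_cast hs
      push_cast
      linear_combination hsq - hsC / 4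
    rcases mul_eq_zero.1 hfac with h | h
    · refine ⟨3 * ((1 + Real.sqrt 5) / 2) + 2, ?_, by linarith, by linarith⟩
      rw [h4, sub_eq_zero.1 h]; push_cast; ring
    · refine ⟨3 * ((1 - Real.sqrt 5) / 2) + 2, ?_, by linarith, by linarith⟩
      rw [h4, sub_eq_zero.1 h]; push_cast; ring
  obtain ⟨x, hx, h0, h1⟩ := key
  intro r s hrs
  simp only [hx] at hrs
  exact pow_right_injective₀ h0 h1 (by exact_mod_cast hrs)

lemma golden_norm_le {z : ℂ} (hsq : z ^ 2 = z + 1) : ‖z ^ 4‖ ≤ 7 ∧ ‖2 * z - 1‖ ≤ 3 := by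
  have h4 : z ^ 4 = 3 * z + 2 := by linear_combination (z ^ 2 + z + 2) * hsq
  have h1 : ‖z‖ ^ 2 ≤ ‖z‖ + 1 := by
    rw [← norm_pow, hsq]
    exact (norm_add_le _ _).trans (by simp)
  have h2 : ‖z‖ ≤ 5 / 3 := by nlinarith [norm_nonneg (z)]
  constructor
  · rw [h4]
    refine (norm_add_le _ _).trans ?_
    rw [norm_mul]
    simp only [Complex.norm_ofNat]
    linarith
  · have h5 : ‖2 * z - 1‖ ^ 2 = 5 := by
      rw [← norm_pow, show (2 * z - 1) ^ 2 = 5 by linear_combination 4 * hsq]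
      simp
    nlinarith [norm_nonneg (2 * z - 1)]

/-! ### A `5`-adic bound for `9 F_n - C` -/

/-- The auxiliary determinant, with `K = 6820 h m`, `L = 4 m + 1`, `R = 300 h m` and `V = 100 m`. It
is nonzero under a given complex embedding, of bounded size under all of them, and divisible by a
large power of `3 w + 1` in every ring in which `s` becomes `9 w ^ n`. The integer `s` is a root of
`s² = 81 ε + √5 C s`, where `√5 = 2 x - 1`; for `ε = (-1) ^ n` and `C = 9 F_n` one root is `9 w ^
n`. -/
lemma exists_auxiliary {T : Type} [CommRing T] (x s : T) (hx : x ^ 2 = x + 1) (C ε : ℤ)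
    (hε : ε = 1 ∨ ε = -1) (hs : s * s = 81 * (ε : T) + (2 * x - 1) * (C : T) * s)
    (φ : T →+* ℂ) (n h m : ℕ) (hh : 6 ≤ h) (hm : 15 ≤ m) (hn : 300 * h * m ≤ n)
    (hmn : 104 * m * n ≤ 2 ^ m) (hC : 3 * |C| + 9 ≤ 2 ^ h) :
    ∃ D : T, φ D ≠ 0 ∧
      (∀ χ : T →+* ℂ, ‖χ D‖ ^ 2 ≤
        2 ^ (6820 * h * m * (4 * m + 1) * (2 * m * (6820 * h * m)))) ∧
      (∀ (W : Type) [CommRing W] (χ : T →+* W), χ s = 9 * χ x ^ n →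
        (3 * χ x + 1) ^ (6820 * h * m * (4 * m + 1) * (2 * m * (6820 * h * m))) ∣ χ D) := by
  have hhm : 6 * m ≤ h * m := Nat.mul_le_mul_right m hh
  have hhm2 : 1 ≤ h * m := by omega
  have himg : ∀ χ : T →+* ℂ, χ x ^ 2 = χ x + 1 ∧
      χ s * χ s = 81 * (ε : ℂ) + (2 * χ x - 1) * (C : ℂ) * χ s := by
    intro χ
    constructor
    · rw [← map_pow, hx, map_add, map_one]
    · have := congrArg χ hs
      have h81 : χ 81 = 81 := map_ofNat χ 81
      have h2 : χ 2 = 2 := map_ofNat χ 2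
      simpa [h81, h2] using this
  have hKL : 6820 * h * m * (4 * m + 1) ≤ 300 * h * m * (100 * m) := by
    have : 6820 * (4 * m + 1) ≤ 300 * (100 * m) := by omega
    calc 6820 * h * m * (4 * m + 1) = (h * m) * (6820 * (4 * m + 1)) := by ring
      _ ≤ (h * m) * (300 * (100 * m)) := Nat.mul_le_mul_left _ this
      _ = _ := by ring
  have hN : 6820 * h * m * (4 * m + 1) ≤ 2 ^ m := by
    refine hKL.trans (le_trans ?_ hmn)
    calc 300 * h * m * (100 * m) ≤ n * (100 * m) := Nat.mul_le_mul_right _ hn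
      _ ≤ n * (104 * m) := Nat.mul_le_mul_left _ (by omega)
      _ = _ := by ring
  have hX : 300 * h * m + (4 * m + 1) + 100 * m * n ≤ 2 ^ m := by
    refine le_trans ?_ hmn
    have h1 : 300 * h * m = 300 * (h * m) := by ring
    have h2 : 15 * n ≤ m * n := Nat.mul_le_mul_right n hm
    have h3 : 104 * m * n = 100 * m * n + 4 * (m * n) := by ring
    omega
  obtain ⟨f, hf⟩ := exists_interpDet_ne_zero (φ x) (φ s)
    (golden_pow_injective (himg φ).1)
    (by
      intro h0
      have := (himg φ).1
      rw [h0] at this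
      norm_num at this)
    (by
      intro h0
      have := (himg φ).2
      rw [h0] at this
      rcases hε with h | h <;> norm_num [h] at this)
    (K := 6820 * h * m) (L := 4 * m + 1) (R := 300 * h * m) (V := 100 * m) (n := n)
    (by nlinarith) hn hKL
  refine ⟨interpDet x s n f, ?_, ?_, ?_⟩
  · rwa [map_interpDet]
  · intro χ
    obtain ⟨hz, hσ⟩ := himg χ
    obtain ⟨hz7, hz3⟩ := golden_norm_le hz
    have hσn : ‖χ s‖ ≤ 2 ^ h := by
      have hCr : 3 * |(C : ℝ)| + 9 ≤ 2 ^ h := by exact_mod_cast hC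
      refine le_trans ?_ hCr
      have h1 : ‖χ s‖ * ‖χ s‖ ≤ 81 + 3 * |(C : ℝ)| * ‖χ s‖ := by
        rw [← norm_mul, hσ]
        refine (norm_add_le _ _).trans ?_
        have hε1 : ‖81 * (ε : ℂ)‖ = 81 := by
          rcases hε with h | h <;> simp [h]
        rw [hε1, norm_mul, norm_mul, Complex.norm_intCast]
        gcongr
      by_contra! hlt
      nlinarith [abs_nonneg (C : ℝ), norm_nonneg (χ s)]
    rw [map_interpDet]
    refine (norm_interpDet_le (χ x) (χ s) n m h f hz7 hσn (by omega) hX hN).trans ?_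
    refine pow_le_pow_right₀ (by norm_num) (Nat.mul_le_mul_left _ ?_)
    have h1 : m * (6820 * h * m - 1) + m = m * (6820 * h * m) := by
      rw [← Nat.mul_succ]; congr 1; have : 6820 * h * m = 6820 * (h * m) := by ring
      omega
    have h2 : 12 * (300 * h * m + (4 * m + 1)) + 32 * (h * (100 * m)) + 1 ≤ 6820 * h * m := by
      nlinarith
    have h3 : m * (12 * (300 * h * m + (4 * m + 1)) + 32 * (h * (100 * m)) + 1) ≤
      m * (6820 * h * m) := Nat.mul_le_mul_left _ h2
    have h4 : 4 * m + 1 - 1 = 4 * m := by omega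
    rw [h4]
    nlinarith
  · intro W _ χ hχ
    rw [map_interpDet]
    refine pow_dvd_interpDet (χ x) (χ s) n ?_ hχ f _ ?_
    · rw [← map_pow, hx, map_add, map_one]
    · have hK : 1 ≤ 6820 * h * m := by nlinarith
      obtain ⟨k, hk⟩ : ∃ k, 6820 * h * m = k + 1 := ⟨6820 * h * m - 1, by omega⟩
      rw [hk]
      have : (k + 1) * (4 * m + 1) - 1 = k + 4 * m * (k + 1) := by
        rw [Nat.sub_eq_iff_eq_add (by nlinarith)]; ring
      rw [this]
      simp only [Nat.add_sub_cancel]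
      apply le_of_eq
      ring

/-- Liouville inequality in `ℤ[w]`: a nonzero element divisible by `(3 w + 1) ^ d` has norm at least
`5 ^ d` in absolute value, and the norm is the product of the two complex images. -/
lemma golden_bound {D : GoldenInt} {d E : ℕ} (hd : (3 * GoldenInt.w + 1) ^ d ∣ D) (hD : D ≠ 0)
    (hE : ∀ χ : GoldenInt →+* ℂ, ‖χ D‖ ^ 2 ≤ 2 ^ E) : 5 ^ (2 * d) ≤ 2 ^ (2 * E) := by
  obtain ⟨y, rfl⟩ := hd
  set D := (3 * GoldenInt.w + 1) ^ d * y with hDdef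
  have h1 : D.norm = (-5) ^ d * y.norm := by
    rw [hDdef, map_mul, map_pow, GoldenInt.norm_pi]
  have h0 : D.norm ≠ 0 := fun h => hD (GoldenInt.norm_eq_zero h)
  have hy : y.norm ≠ 0 := fun h => h0 (by rw [h1, h, mul_zero])
  obtain ⟨g₁, g₂, hg⟩ := exists_norm_eq_mul (a := (1 : ℤ)) (b := 1) (Int.castRingHom ℂ)
  have h2 : ((5 : ℝ) ^ d) ≤ ‖((D.norm : ℤ) : ℂ)‖ := by
    rw [h1]
    push_cast
    rw [norm_mul, norm_pow]
    have : (1 : ℝ) ≤ ‖((y.norm : ℤ) : ℂ)‖ := by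
      rw [Complex.norm_intCast]
      exact_mod_cast Int.one_le_abs hy
    rw [show ‖(-5 : ℂ)‖ = 5 by simp]
    exact le_mul_of_one_le_right (by positivity) this
  have h3 : ((D.norm : ℤ) : ℂ) = g₁ D * g₂ D := hg D
  rw [h3, norm_mul] at h2
  have h4 : ((5 : ℝ) ^ d) ^ 2 ≤ 2 ^ (2 * E) := by
    calc ((5 : ℝ) ^ d) ^ 2 ≤ (‖g₁ D‖ * ‖g₂ D‖) ^ 2 := by gcongr
      _ = ‖g₁ D‖ ^ 2 * ‖g₂ D‖ ^ 2 := by ring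
      _ ≤ 2 ^ E * 2 ^ E := mul_le_mul (hE _) (hE _) (by positivity) (by positivity)
      _ = 2 ^ (2 * E) := by ring
  rw [← pow_mul, mul_comm d 2] at h4
  exact_mod_cast h4

/-- If no root of `s² = 81 ε + (2 w - 1) C s` has the form `c + C w` with `c` an integer, then the
norm of the quadratic algebra over `ℤ[w]` defined by this equation is anisotropic: a nontrivial zero
would make the discriminant `5 C² + 324 ε` a square in `ℚ(√5)`. -/
lemma quad_norm_eq_zero (C ε : ℤ) (hε : ε = 1 ∨ ε = -1)
    (hns : ∀ c : ℤ, c ^ 2 + C * c - C ^ 2 ≠ 81 * ε)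
    {D : QuadraticAlgebra GoldenInt (81 * (ε : GoldenInt)) ((2 * GoldenInt.w - 1) * (C : GoldenInt))}
    (hD : D.norm = 0) : D = 0 := by
  rw [QuadraticAlgebra.norm_def] at hD
  have hw := GoldenInt.w_sq
  by_cases hq : D.im = 0
  · rw [hq] at hD
    have hp : D.re * D.re = 0 := by simpa using hD
    have := congrArg QuadraticAlgebra.norm hp
    rw [map_mul, QuadraticAlgebra.norm_zero, mul_self_eq_zero] at this
    ext1
    · exact GoldenInt.norm_eq_zero this
    · exact hq
  · exfalso
    set N := D.im.norm with hN
    have hN0 : N ≠ 0 := fun h => hq (GoldenInt.norm_eq_zero h)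
    have hNs : (N : GoldenInt) = D.im * star D.im := by
      rw [← QuadraticAlgebra.algebraMap_norm_eq_mul_star]; simp [hN]
    set A := (2 * D.re + D.im * ((2 * GoldenInt.w - 1) * (C : GoldenInt))) * star D.im with hA
    have hA2 : A * A = ((N ^ 2 * (5 * C ^ 2 + 324 * ε) : ℤ) : GoldenInt) := by
      push_cast
      rw [hNs, hA]
      linear_combination (4 * star D.im ^ 2) * hD +
        (4 * (D.im * C * star D.im) ^ 2) * hw
    have hre := congrArg QuadraticAlgebra.re hA2
    have him := congrArg QuadraticAlgebra.im hA2
    rw [QuadraticAlgebra.re_mul, QuadraticAlgebra.re_intCast] at hre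
    rw [QuadraticAlgebra.im_mul, QuadraticAlgebra.im_intCast] at him
    simp only [Int.cast_id] at hre him
    have him2 : A.im * (2 * A.re + A.im) = 0 := by linear_combination him
    rcases mul_eq_zero.1 him2 with h | h
    · rw [h] at hre
      have hdv : N ∣ A.re := by
        rw [← Int.pow_dvd_pow_iff (n := 2) (by norm_num)]
        exact ⟨5 * C ^ 2 + 324 * ε, by linear_combination hre⟩
      obtain ⟨k, hk⟩ := hdv
      have hk2 : k ^ 2 = 5 * C ^ 2 + 324 * ε := by
        rw [hk] at hre
        refine mul_left_cancel₀ (pow_ne_zero 2 hN0) ?_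
        linear_combination hre
      have hpar : (k - C) % 2 = 0 := by
        have : (k ^ 2 - 5 * C ^ 2) % 2 = 0 := by omega
        rcases Int.emod_two_eq_zero_or_one k with h1 | h1 <;>
          rcases Int.emod_two_eq_zero_or_one C with h2 | h2 <;>
          simp [Int.sub_emod, Int.mul_emod, pow_two, h1, h2] at this ⊢
      obtain ⟨c, hc⟩ := Int.dvd_of_emod_eq_zero hpar
      refine hns c ?_
      have : k = C + 2 * c := by omega
      rw [this] at hk2
      linarith
    · have hb : A.im = -2 * A.re := by linear_combination h
      rw [hb] at hre
      have hdv : N ∣ 5 * A.re := by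
        rw [← Int.pow_dvd_pow_iff (n := 2) (by norm_num)]
        exact ⟨5 * (5 * C ^ 2 + 324 * ε), by linear_combination 5 * hre⟩
      obtain ⟨k, hk⟩ := hdv
      have hk2 : k ^ 2 = 5 * (5 * C ^ 2 + 324 * ε) := by
        refine mul_left_cancel₀ (pow_ne_zero 2 hN0) ?_
        linear_combination 5 * hre - (5 * A.re + N * k) * hk
      have h5k : (5 : ℤ) ∣ k := (by norm_num : Prime (5 : ℤ)).dvd_of_dvd_pow ⟨_, hk2⟩
      obtain ⟨l, rfl⟩ := h5k
      have : 5 * (l ^ 2 - C ^ 2) = 324 * ε := by nlinarith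
      rcases hε with h | h <;> rw [h] at this <;> omega

/-- The `5`-adic distance of `9 F_n` from an integer `C` of moderate size cannot be too small. Let
`s` be a root of `s² = 81 (-1) ^ n + (2 w - 1) C s`, either in `ℤ[w]` or in a quadratic extension.
Modulo the `d`-th power of the prime `3 w + 1` above `5`, one may take `s ≡ 9 w ^ n`, so that the
auxiliary determinant is divisible by this power; this contradicts its size, measured by the norm
down to `ℤ`. Here `m` bounds `log₂ n` and `h` the height of `C`. -/
theorem five_adic_bound (n e h m : ℕ) (C : ℤ) (hh : 6 ≤ h) (hm : 15 ≤ m)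
    (hn : 300 * h * m ≤ n) (hmn : 104 * m * n ≤ 2 ^ m) (hC : 3 * |C| + 9 ≤ 2 ^ h)
    (hdvd : (5 : ℤ) ^ e ∣ 9 * (Nat.fib n : ℤ) - C) : e < 2 * 10 ^ 8 * h ^ 2 * m ^ 4 := by
  by_contra! he
  set d := 6820 * h * m * (4 * m + 1) * (2 * m * (6820 * h * m)) with hd
  have hd2e : d ≤ 2 * e := by
    have h1 : 6820 ^ 2 * (4 * m + 1) ≤ 2 * 10 ^ 8 * m := by omega
    have h2 : d = h ^ 2 * m ^ 3 * 2 * (6820 ^ 2 * (4 * m + 1)) := by rw [hd]; ring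
    have h3 : 2 * (2 * 10 ^ 8 * h ^ 2 * m ^ 4) = h ^ 2 * m ^ 3 * 2 * (2 * 10 ^ 8 * m) := by ring
    have h4 : d ≤ 2 * (2 * 10 ^ 8 * h ^ 2 * m ^ 4) := by
      rw [h2, h3]
      exact Nat.mul_le_mul_left _ h1
    omega
  have hdpos : 0 < d := by positivity
  set ε : ℤ := (-1) ^ n with hεdef
  have hε : ε = 1 ∨ ε = -1 := neg_one_pow_eq_or ℤ n
  set G : ℤ := 9 * ((Nat.fib (n + 1) : ℤ) - Nat.fib n) with hG
  have hGn : G ^ 2 + 9 * Nat.fib n * G - (9 * Nat.fib n) ^ 2 = 81 * ε := by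
    have := GoldenInt.norm_w_pow n
    rw [GoldenInt.w_pow, GoldenInt.norm_eq] at this
    rw [hG, hεdef, ← this]
    ring
  have hwn : (9 * GoldenInt.w ^ n : GoldenInt) = (G : GoldenInt) +
      ((9 * Nat.fib n : ℤ) : GoldenInt) * GoldenInt.w := by
    rw [GoldenInt.w_pow, GoldenInt.eq_re_im ⟨_, _⟩, hG]
    push_cast
    ring
  have hpi := GoldenInt.pi_pow_dvd hd2e
  have hpow : ¬ (5 ^ (2 * d) ≤ 2 ^ (2 * (2 * d))) := by
    rw [not_le, pow_mul 2 2 (2 * d)]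
    exact Nat.pow_lt_pow_left (by norm_num) (by omega)
  have hdvdO : ∀ z : ℤ, (5 : ℤ) ^ e ∣ z → (3 * GoldenInt.w + 1 : GoldenInt) ^ d ∣ (z : GoldenInt) := by
    rintro z ⟨t, rfl⟩
    push_cast
    exact hpi.mul_right _
  by_cases hsq : ∃ c : ℤ, c ^ 2 + C * c - C ^ 2 = 81 * ε
  -- If a root `s = c + C w` lies in `ℤ[w]`, its conjugate `-c - C + C w` is the only other one,
  -- and exactly one of them is congruent to `9 w ^ n`.
  · have hsq2 : ∃ c : ℤ, c ^ 2 + C * c - C ^ 2 = 81 * ε ∧ (5 : ℤ) ^ e ∣ G - c := by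
      obtain ⟨c, hc⟩ := hsq
      have hprod : (5 : ℤ) ^ e ∣ (G - c) * (G - (-c - C)) := by
        have : (G - c) * (G - (-c - C)) =
            (9 * (Nat.fib n : ℤ) - C) * (9 * Nat.fib n + C - G) := by
          linear_combination hGn - hc
        rw [this]
        exact hdvd.mul_right _
      by_cases h5 : (5 : ℤ) ∣ G - c
      · refine ⟨c, hc, ?_⟩
        have hcop : IsCoprime ((5 : ℤ) ^ e) (G - (-c - C)) := by
          refine IsCoprime.pow_left ?_
          rw [(by norm_num : Prime (5 : ℤ)).coprime_iff_not_dvd]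
          intro h6
          have h7 : (5 : ℤ) ∣ 2 * c + C := by
            have := dvd_sub h6 h5
            rwa [show G - (-c - C) - (G - c) = 2 * c + C by ring] at this
          obtain ⟨t, ht⟩ := h7
          have : 324 * ε = 5 * (5 * t ^ 2 - C ^ 2) := by
            linear_combination -4 * hc + (2 * c + C + 5 * t) * ht
          rcases hε with h | h <;> rw [h] at this <;> omega
        exact hcop.dvd_of_dvd_mul_right hprod
      · refine ⟨-c - C, by linear_combination hc, ?_⟩
        have hcop : IsCoprime ((5 : ℤ) ^ e) (G - c) := by
          refine IsCoprime.pow_left ?_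
          rwa [(by norm_num : Prime (5 : ℤ)).coprime_iff_not_dvd]
        exact hcop.dvd_of_dvd_mul_left hprod
    obtain ⟨c, hc, hGc⟩ := hsq2
    obtain ⟨φ, -, -⟩ := exists_norm_eq_mul (a := (1 : ℤ)) (b := 1) (Int.castRingHom ℂ)
    obtain ⟨D, hD0, hDb, hDp⟩ := exists_auxiliary GoldenInt.w
      ((c : GoldenInt) + (C : GoldenInt) * GoldenInt.w) GoldenInt.w_sq C ε hε
      (by
        have hcO : ((c : GoldenInt) ^ 2 + C * c - C ^ 2) = 81 * (ε : GoldenInt) := by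
          exact_mod_cast congrArg (Int.cast : ℤ → GoldenInt) hc
        linear_combination hcO - (C : GoldenInt) ^ 2 * GoldenInt.w_sq)
      φ n h m hh hm hn hmn hC
    have hmem := hDp _ (Ideal.Quotient.mk (Ideal.span {(3 * GoldenInt.w + 1 : GoldenInt) ^ d})) (by
      have h9 : ∀ y : GoldenInt, (9 * Ideal.Quotient.mk
          (Ideal.span {(3 * GoldenInt.w + 1 : GoldenInt) ^ d}) y ^ n) =
          Ideal.Quotient.mk (Ideal.span {(3 * GoldenInt.w + 1 : GoldenInt) ^ d}) (9 * y ^ n) := by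
        intro y; rw [map_mul, map_pow, map_ofNat]
      rw [h9, Ideal.Quotient.eq, Ideal.mem_span_singleton, hwn, ← dvd_neg]
      have := dvd_add (hdvdO _ hGc) ((hdvdO _ hdvd).mul_right GoldenInt.w)
      convert this using 1
      push_cast
      ring)
    have hz : (3 * Ideal.Quotient.mk (Ideal.span {(3 * GoldenInt.w + 1 : GoldenInt) ^ d})
        GoldenInt.w + 1) ^ d = 0 := by
      have h3 : (3 * Ideal.Quotient.mk (Ideal.span {(3 * GoldenInt.w + 1 : GoldenInt) ^ d})
        GoldenInt.w + 1) ^ d = Ideal.Quotient.mk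
          (Ideal.span {(3 * GoldenInt.w + 1 : GoldenInt) ^ d}) ((3 * GoldenInt.w + 1) ^ d) := by
        rw [map_pow, map_add, map_mul, map_ofNat, map_one]
      rw [h3, Ideal.Quotient.eq_zero_iff_mem]
      exact Ideal.mem_span_singleton_self _
    rw [hz, zero_dvd_iff, Ideal.Quotient.eq_zero_iff_mem, Ideal.mem_span_singleton] at hmem
    have := golden_bound hmem (fun h => hD0 (by rw [h, map_zero])) hDb
    exact hpow (this.trans (Nat.pow_le_pow_right (by norm_num) (by omega)))
  -- Otherwise `s` generates a quadratic extension `S`, which maps to `ℤ[w] / (3 w + 1) ^ d` by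
  -- `s ↦ 9 w ^ n`; the norm of the determinant from `S` to `ℤ[w]` is then divisible.
  · push Not at hsq
    set S := QuadraticAlgebra GoldenInt (81 * (ε : GoldenInt))
      ((2 * GoldenInt.w - 1) * (C : GoldenInt)) with hS
    obtain ⟨φ₀, -, -⟩ := exists_norm_eq_mul (a := (1 : ℤ)) (b := 1) (Int.castRingHom ℂ)
    obtain ⟨φ, -, -⟩ := exists_norm_eq_mul (a := 81 * (ε : GoldenInt))
      (b := (2 * GoldenInt.w - 1) * (C : GoldenInt)) φ₀
    set ι : GoldenInt →+* S := algebraMap GoldenInt S with hι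
    have hsw : (⟨0, 1⟩ : S) * ⟨0, 1⟩ = 81 * (ε : S) + (2 * ι GoldenInt.w - 1) * (C : S) * ⟨0, 1⟩ := by
      have h1 : (⟨0, 1⟩ : S) * ⟨0, 1⟩ = ι (81 * (ε : GoldenInt)) +
          ι ((2 * GoldenInt.w - 1) * (C : GoldenInt)) * ⟨0, 1⟩ := by
        exact quad_omega_mul_omega
      rw [h1]
      simp only [map_mul, map_sub, map_one, map_ofNat, map_intCast]
    obtain ⟨D, hD0, hDb, hDp⟩ := exists_auxiliary (ι GoldenInt.w) (⟨0, 1⟩ : S)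
      (by rw [← map_pow, GoldenInt.w_sq, map_add, map_one]) C ε hε hsw φ n h m hh hm hn hmn hC
    set q := Ideal.Quotient.mk (Ideal.span {(3 * GoldenInt.w + 1 : GoldenInt) ^ d}) with hq
    have hqe : q (9 * GoldenInt.w ^ n) * q (9 * GoldenInt.w ^ n) = q (81 * (ε : GoldenInt)) +
        q ((2 * GoldenInt.w - 1) * (C : GoldenInt)) * q (9 * GoldenInt.w ^ n) := by
      rw [← map_mul, ← map_mul, ← map_add, hq, Ideal.Quotient.eq, Ideal.mem_span_singleton]
      have hGO : ((G : GoldenInt) ^ 2 + 9 * (Nat.fib n : GoldenInt) * G - (9 * Nat.fib n) ^ 2) =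
          81 * (ε : GoldenInt) := by
        exact_mod_cast congrArg (Int.cast : ℤ → GoldenInt) hGn
      have := (hdvdO _ hdvd).mul_right (9 * GoldenInt.w ^ n * (2 * GoldenInt.w - 1))
      convert this using 1
      rw [hwn]
      push_cast
      have hw := GoldenInt.w_sq
      linear_combination hGO - (9 * Nat.fib n) ^ 2 * hw
    set χ : S →+* _ := quadEval q (q (9 * GoldenInt.w ^ n)) hqe with hχ
    have hχι : ∀ y, χ (ι y) = q y := by
      intro y
      exact quadEval_algebraMap q _ hqe y
    have hmem := hDp _ χ (by
      rw [hχι, hχ, quadEval_apply, map_mul q 9, map_pow, map_ofNat]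
      simp)
    have hz : (3 * q GoldenInt.w + 1) ^ d = 0 := by
      have h3 : (3 * q GoldenInt.w + 1) ^ d = q ((3 * GoldenInt.w + 1) ^ d) := by
        rw [map_pow, map_add, map_mul, map_ofNat, map_one]
      rw [h3, hq, Ideal.Quotient.eq_zero_iff_mem]
      exact Ideal.mem_span_singleton_self _
    rw [hχι, hz, zero_dvd_iff] at hmem
    have hnorm : q D.norm = 0 := by
      rw [← hχι, hι, QuadraticAlgebra.algebraMap_norm_eq_mul_star, map_mul, hmem, zero_mul]
    rw [hq, Ideal.Quotient.eq_zero_iff_mem, Ideal.mem_span_singleton] at hnorm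
    have hn0 : D.norm ≠ 0 := fun h0 => hD0 (by
      rw [quad_norm_eq_zero C ε hε hsq h0, map_zero])
    refine hpow (golden_bound hnorm hn0 fun ψ => ?_)
    obtain ⟨g₁, g₂, hg⟩ := exists_norm_eq_mul (a := 81 * (ε : GoldenInt))
      (b := (2 * GoldenInt.w - 1) * (C : GoldenInt)) ψ
    rw [hg, norm_mul, mul_pow, two_mul d, pow_add]
    exact mul_le_mul (hDb _) (hDb _) (by positivity) (by positivity)

/-! ### Fibonacci numbers modulo powers of five -/

theorem fib_cassini (m : ℕ) : ∃ ε : ℤ, ε ^ 2 = 1 ∧ (m % 2 = 0 → ε = 1) ∧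
    (Nat.fib (m + 1) : ℤ) ^ 2 - Nat.fib m * Nat.fib (m + 1) - (Nat.fib m : ℤ) ^ 2 = ε := by
  refine ⟨(-1) ^ m, by rw [← pow_mul, mul_comm, pow_mul]; norm_num, fun h =>
    Even.neg_one_pow (Nat.even_iff.2 h), ?_⟩
  induction m with
  | zero => norm_num
  | succ k ih =>
    rw [pow_succ (-1 : ℤ), ← ih, Nat.fib_add_two (n := k)]
    push_cast
    ring

/-- In particular `F_{5m} / (5 F_m)` is an integer prime to `5`, so passing from `m` to `5m` raises
the `5`-adic valuation of `F_m` by exactly one. -/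
theorem fib_five_mul (m : ℕ) : ∃ ε : ℤ, (Nat.fib (5 * m) : ℤ) =
    5 * Nat.fib m * (1 + 5 * (Nat.fib m ^ 4 + ε * Nat.fib m ^ 2)) := by
  obtain ⟨ε, hε, -, h⟩ := fib_cassini m
  refine ⟨ε, ?_⟩
  rcases m with - | k
  · simp
  have e : ∀ j : ℕ, (Nat.fib (j + (k + 1)) : ℤ) =
      Nat.fib j * (Nat.fib (k + 2) - Nat.fib (k + 1)) + Nat.fib (j + 1) * Nat.fib (k + 1) ∧
      (Nat.fib (j + (k + 1) + 1) : ℤ) =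
        Nat.fib j * Nat.fib (k + 1) + Nat.fib (j + 1) * Nat.fib (k + 2) := by
    intro j
    constructor
    · rw [← add_assoc, Nat.fib_add, Nat.fib_add_two (n := k)]; push_cast; ring
    · rw [Nat.fib_add j (k + 1)]; push_cast; ring
  set p : ℤ := (Nat.fib (k + 1) : ℤ)
  set q : ℤ := (Nat.fib (k + 1 + 1) : ℤ) with hq
  obtain ⟨a2, b2⟩ := e (k + 1)
  obtain ⟨a3, b3⟩ := e (k + 1 + (k + 1))
  obtain ⟨a4, b4⟩ := e (k + 1 + (k + 1) + (k + 1))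
  obtain ⟨a5, -⟩ := e (k + 1 + (k + 1) + (k + 1) + (k + 1))
  have : 5 * (k + 1) = k + 1 + (k + 1) + (k + 1) + (k + 1) + (k + 1) := by ring
  rw [this, a5, a4, b4, a3, b3, a2, b2]
  rw [show Nat.fib (k + 2) = Nat.fib (k + 1 + 1) from rfl, ← hq]
  have hε' : (q ^ 2 - p * q - p ^ 2) ^ 2 = 1 := by rw [h, hε]
  rw [← h]
  linear_combination (5 * p) * hε'

theorem five_pow_dvd_of_dvd_fib (E : ℕ) : ∀ m : ℕ, (5 : ℤ) ^ E ∣ Nat.fib m → (5 : ℤ) ^ E ∣ m := by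
  induction E with
  | zero => simp
  | succ E ih =>
    intro m h
    have h5 : 5 ∣ m := by
      have h1 : (5 : ℤ) ∣ Nat.fib m := (dvd_pow_self 5 (by omega)).trans h
      have h2 : 5 ∣ Nat.fib m := by exact_mod_cast h1
      have h3 := Nat.fib_gcd m 5
      rw [show Nat.fib 5 = 5 from rfl, Nat.gcd_eq_right h2] at h3
      rcases (Nat.dvd_prime Nat.prime_five).1 (Nat.gcd_dvd_right m 5) with h4 | h4
      · rw [h4] at h3; norm_num at h3
      · rw [← h4]; exact Nat.gcd_dvd_left m 5
    obtain ⟨k, rfl⟩ := h5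
    obtain ⟨ε, he⟩ := fib_five_mul k
    rw [he, pow_succ', mul_assoc] at h
    have h1 := (mul_dvd_mul_iff_left (by norm_num : (5 : ℤ) ≠ 0)).1 h
    have h2 : IsCoprime ((5 : ℤ) ^ E) (1 + 5 * (Nat.fib k ^ 4 + ε * Nat.fib k ^ 2)) :=
      IsCoprime.pow_left ⟨-(Nat.fib k ^ 4 + ε * Nat.fib k ^ 2), 1, by ring⟩
    have := ih k (h2.dvd_of_dvd_mul_right h1)
    rw [pow_succ']
    push_cast
    exact mul_dvd_mul_left 5 this

theorem fib_add_four_mul (ν k : ℕ) : (Nat.fib (ν + 4 * k) : ℤ) - Nat.fib ν =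
    Nat.fib (2 * k) * (2 * Nat.fib (ν + 2 * k + 1) - Nat.fib (ν + 2 * k)) := by
  obtain ⟨ε, -, h1, h⟩ := fib_cassini (2 * k)
  rw [h1 (by omega)] at h
  rcases k with - | k
  · simp
  have e : ∀ j : ℕ, (Nat.fib (j + 2 * (k + 1)) : ℤ) =
      Nat.fib j * (Nat.fib (2 * (k + 1) + 1) - Nat.fib (2 * (k + 1))) +
        Nat.fib (j + 1) * Nat.fib (2 * (k + 1)) ∧
      (Nat.fib (j + 2 * (k + 1) + 1) : ℤ) =
        Nat.fib j * Nat.fib (2 * (k + 1)) + Nat.fib (j + 1) * Nat.fib (2 * (k + 1) + 1) := by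
    intro j
    constructor
    · rw [show j + 2 * (k + 1) = j + (2 * k + 1) + 1 by ring, Nat.fib_add,
        show 2 * (k + 1) + 1 = (2 * k + 1) + 2 by ring, Nat.fib_add_two (n := 2 * k + 1),
        show 2 * (k + 1) = 2 * k + 1 + 1 by ring]; push_cast; ring
    · rw [Nat.fib_add j (2 * (k + 1))]; push_cast; ring
  have h4 : ν + 4 * (k + 1) = ν + 2 * (k + 1) + 2 * (k + 1) := by ring
  rw [h4, (e (ν + 2 * (k + 1))).1, (e ν).1, (e ν).2]
  linear_combination (Nat.fib ν : ℤ) * h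

/-- The number `2 F_{j+1} - F_j` is the Lucas number `L_j`. -/
theorem five_not_dvd_lucas (j : ℕ) : ¬ (5 : ℤ) ∣ 2 * Nat.fib (j + 1) - Nat.fib j := by
  intro h
  obtain ⟨ε, h1, -, h2⟩ := fib_cassini j
  have h3 : (2 * Nat.fib (j + 1) - Nat.fib j : ℤ) ^ 2 = 5 * Nat.fib j ^ 2 + 4 * ε := by
    linear_combination 4 * h2
  have h4 : (5 : ℤ) ∣ 4 * ε :=
    (Int.dvd_add_right (Dvd.intro _ rfl)).1 (h3 ▸ dvd_pow h two_ne_zero)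
  have h5 : (5 : ℤ) ∣ 4 := by
    have := h4.mul_right ε
    rwa [show 4 * ε * ε = 4 * ε ^ 2 by ring, h1, mul_one] at this
  norm_num at h5

/-- On each residue class modulo `4`, the Fibonacci numbers are injective modulo `5 ^ E` up to the
period `4 * 5 ^ E`: the difference of two terms is `F_{2k}` times a Lucas number, which is prime to
`5`. -/
theorem fib_five_adic_injective {E n ν : ℕ} (h4 : n ≡ ν [MOD 4])
    (h : (5 : ℤ) ^ E ∣ Nat.fib n - Nat.fib ν) : n ≡ ν [MOD 4 * 5 ^ E] := by
  have key : ∀ μ k : ℕ, (5 : ℤ) ^ E ∣ Nat.fib (μ + 4 * k) - Nat.fib μ →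
      μ ≡ μ + 4 * k [MOD 4 * 5 ^ E] := by
    intro μ k h
    rw [fib_add_four_mul] at h
    have h2 : IsCoprime ((5 : ℤ) ^ E) (2 * Nat.fib (μ + 2 * k + 1) - Nat.fib (μ + 2 * k)) :=
      IsCoprime.pow_left (((Nat.prime_iff_prime_int.1 Nat.prime_five).coprime_iff_not_dvd).2 (five_not_dvd_lucas _))
    have h3 := five_pow_dvd_of_dvd_fib E _ (h2.dvd_of_dvd_mul_right h)
    have h6 : 5 ^ E ∣ 2 * k := by exact_mod_cast h3
    have h7 : 5 ^ E ∣ k := (Nat.Coprime.pow_left E (by norm_num)).dvd_of_dvd_mul_left h6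
    refine (Nat.modEq_iff_dvd' (by omega)).2 ?_
    rw [Nat.add_sub_cancel_left]
    exact mul_dvd_mul_left 4 h7
  rcases le_total n ν with hle | hle
  · obtain ⟨k, hk⟩ := (Nat.modEq_iff_dvd' hle).1 h4
    obtain rfl : ν = n + 4 * k := by omega
    exact key n k (by rw [← dvd_neg]; simpa using h)
  · obtain ⟨k, hk⟩ := (Nat.modEq_iff_dvd' hle).1 h4.symm
    obtain rfl : n = ν + 4 * k := by omega
    exact (key ν k h).symm

/-! ### Solving congruences for Fibonacci numbers by lifting -/

/-- Applies `K` to `n` after a case split on `n`, so that kernel reduction evaluates `n` to a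
numeral before it is used. -/
def forceNat (n : ℕ) (K : ℕ → Bool) : Bool :=
  Nat.rec (K 0) (fun k _ => K (Nat.succ k)) n

theorem forceNat_eq (n : ℕ) (K : ℕ → Bool) : forceNat n K = K n := by
  cases n <;> rfl

/-- Residues modulo some `M` of three consecutive Fibonacci numbers `F_{μ-1}`, `F_μ`, `F_{μ+1}`. -/
structure FibTriple where
  g0 : ℕ
  g1 : ℕ
  g2 : ℕ

/-- The triple represents the Fibonacci numbers around the index `μ` modulo `M`. -/
def FibTriple.Good (M μ : ℕ) (g : FibTriple) : Prop :=
  ∃ s, μ = s + 1 ∧ g.g0 ≡ Nat.fib s [MOD M] ∧ g.g1 ≡ Nat.fib (s + 1) [MOD M] ∧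
    g.g2 ≡ Nat.fib (s + 2) [MOD M]

/-- Starting from residues `(a, b)` of `(F_x, F_{x+1})`, adds `t` times the index `μ` of the triple
`g`, while the counter `ν` increases by `t * q`; the result is passed to the continuation `K`. -/
def fibShift (M : ℕ) (g : FibTriple) (ν a b q : ℕ) (K : ℕ → ℕ → ℕ → Bool) : ℕ → Bool :=
  fun t => Nat.rec (motive := fun _ => ℕ → ℕ → ℕ → Bool) K
    (fun _ ih ν a b =>
      forceNat (Nat.mod (Nat.add (Nat.mul a g.g0) (Nat.mul b g.g1)) M) fun a' =>
      forceNat (Nat.mod (Nat.add (Nat.mul a g.g1) (Nat.mul b g.g2)) M) fun b' =>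
      ih (Nat.add ν q) a' b') t ν a b

/-- Hensel lifting: finds the `5`-adic digits of the index `ν`, in a fixed class modulo `4`, with `9
F_ν ≡ C` modulo `M`. At level `q = 4 * 5 ^ k` the next digit is read off from `(9 a - C) / 5 ^ k`
modulo `5`, times a constant `s` depending on the class. At the end the congruence is verified,
together with `ν < 1100` or `N ≤ ν`, so that correctness does not depend on the rule for the digits.
-/
def fibLift (N M C s : ℕ) (l : List FibTriple) : ℕ → ℕ → ℕ → ℕ → Bool :=
  List.rec (motive := fun _ => ℕ → ℕ → ℕ → ℕ → Bool)
    (fun q ν a _ =>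
      (Nat.beq (Nat.mod (Nat.mul 9 a) M) C).and <|
      forceNat ν fun ν =>
      (Nat.ble (Nat.succ ν) q).and ((Nat.ble (Nat.succ ν) 1100).or (Nat.ble N ν)))
    (fun g _ ih q ν a b =>
      fibShift M g ν a b q (fun ν a b => ih (Nat.mul 5 q) ν a b)
        (Nat.mod (Nat.mul s (Nat.div (Nat.mul 4 (Nat.sub (Nat.add (Nat.mul 9 a) M) C)) q)) 5)) l

/-- The entries of the list are triples for the indices `q`, `5 q`, `25 q`, …. -/
def GoodTable (M : ℕ) : ℕ → List FibTriple → Prop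
  | _, [] => True
  | q, g :: l => g.Good M q ∧ GoodTable M (5 * q) l

/-- Builds `n` triples by repeated multiplication of the index by `5`, starting from `g`, and passes
the list to `K`. -/
def fibTable (M : ℕ) (K : List FibTriple → Bool) (n : ℕ) : FibTriple → Bool :=
  Nat.rec (motive := fun _ => (List FibTriple → Bool) → FibTriple → Bool)
    (fun K _ => K [])
    (fun _ ih K g =>
      fibShift M g 0 g.g0 g.g1 0 (fun _ a b =>
        forceNat (Nat.mod (Nat.add a b) M) fun c => ih (fun l => K (g :: l)) ⟨a, b, c⟩) 4) n K

theorem fibShift_spec {M : ℕ} {g : FibTriple} {q : ℕ}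
    {K : ℕ → ℕ → ℕ → Bool} (t : ℕ) : ∀ {ν a b : ℕ} (x : ℕ),
    a ≡ Nat.fib x [MOD M] → b ≡ Nat.fib (x + 1) [MOD M] →
    fibShift M g ν a b q K t = true → ∀ μ, g.Good M μ →
    ∃ a' b', a' ≡ Nat.fib (x + t * μ) [MOD M] ∧ b' ≡ Nat.fib (x + t * μ + 1) [MOD M] ∧
      K (ν + t * q) a' b' = true := by
  induction t with
  | zero =>
    intro ν a b x ha hb h μ hμ
    refine ⟨a, b, by simpa using ha, by simpa using hb, ?_⟩
    simpa [fibShift] using h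
  | succ t ih =>
    intro ν a b x ha hb h μ hμ
    have h' : fibShift M g (ν + q) ((a * g.g0 + b * g.g1) % M) ((a * g.g1 + b * g.g2) % M) q K t
        = true := by
      have : fibShift M g ν a b q K (t + 1) = forceNat ((a * g.g0 + b * g.g1) % M) fun a' =>
        forceNat ((a * g.g1 + b * g.g2) % M) fun b' => fibShift M g (ν + q) a' b' q K t := rfl
      rw [this, forceNat_eq, forceNat_eq] at h
      exact h
    have hμ' := hμ
    obtain ⟨s, rfl, h0, h1, h2⟩ := hμ
    obtain ⟨a', b', h3, h4, h5⟩ := ih (x + (s + 1))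
      ((Nat.mod_modEq _ _).trans (by
        rw [← add_assoc, Nat.fib_add]
        exact (ha.mul h0).add (hb.mul h1)))
      ((Nat.mod_modEq _ _).trans (by
        rw [Nat.fib_add x (s + 1)]
        exact (ha.mul h1).add (hb.mul h2))) h' _ hμ'
    refine ⟨a', b', ?_, ?_, ?_⟩
    · convert h3 using 2; ring
    · convert h4 using 2; ring
    · convert h5 using 2; ring

theorem fibTable_spec {M : ℕ} (n : ℕ) : ∀ {K : List FibTriple → Bool} {g : FibTriple} (μ : ℕ),
    g.Good M μ → fibTable M K n g = true →
    ∃ l, l.length = n ∧ GoodTable M μ l ∧ K l = true := by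
  induction n with
  | zero => exact fun {K g} μ hg h => ⟨[], rfl, trivial, h⟩
  | succ n ih =>
    intro K g μ hg h
    have hg' := hg
    obtain ⟨s, rfl, h0, h1, h2⟩ := hg
    have h' : fibShift M g 0 g.g0 g.g1 0 (fun _ a b =>
        forceNat ((a + b) % M) fun c => fibTable M (fun l => K (g :: l)) n ⟨a, b, c⟩) 4 = true := h
    obtain ⟨a, b, ha, hb, hK⟩ := fibShift_spec 4 s h0 h1 h' _ hg'
    rw [forceNat_eq] at hK
    obtain ⟨l, hl, hG, hKl⟩ := ih (5 * (s + 1)) (g := ⟨a, b, (a + b) % M⟩) ⟨s + 4 * (s + 1), by ring,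
      ha, hb, (Nat.mod_modEq _ _).trans (by rw [Nat.fib_add_two]; exact ha.add hb)⟩ hK
    exact ⟨g :: l, by simp [hl], ⟨hg', hG⟩, hKl⟩

theorem fibLift_spec {N M C s : ℕ} (l : List FibTriple) : ∀ {q ν a b : ℕ},
    GoodTable M q l → 4 ∣ q → a ≡ Nat.fib ν [MOD M] → b ≡ Nat.fib (ν + 1) [MOD M] →
    fibLift N M C s l q ν a b = true →
    ∃ ν', ν' ≡ ν [MOD 4] ∧ ν' < q * 5 ^ l.length ∧ (ν' < 1100 ∨ N ≤ ν') ∧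
      9 * Nat.fib ν' ≡ C [MOD M] := by
  induction l with
  | nil =>
    intro q ν a b _ _ ha _ h
    have h' : ((Nat.beq (9 * a % M) C).and <| forceNat ν fun ν =>
      (Nat.ble (ν + 1) q).and ((Nat.ble (ν + 1) 1100).or (Nat.ble N ν))) = true := h
    rw [forceNat_eq] at h'
    simp only [Bool.and_eq_true, Bool.or_eq_true, Nat.beq_eq, Nat.ble_eq] at h'
    obtain ⟨h1, h2, h3⟩ := h'
    refine ⟨ν, rfl, by simpa using h2, h3, ?_⟩
    rw [← h1]
    exact (ha.symm.mul_left 9).trans (Nat.mod_modEq _ _).symm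
  | cons g l ih =>
    intro q ν a b hG hq ha hb h
    obtain ⟨a', b', ha', hb', hK⟩ := fibShift_spec (M := M) (g := g) 
      (s * (4 * (9 * a + M - C) / q) % 5) ν ha hb
      (h : fibShift M g ν a b q _ _ = true) _ hG.1
    obtain ⟨ν', h1, h2, h3, h4⟩ := ih hG.2 (hq.mul_left 5) ha' hb' hK
    refine ⟨ν', h1.trans ?_, ?_, h3, h4⟩
    · simpa using (Nat.ModEq.refl ν).add (Nat.modEq_zero_iff_dvd.2 (hq.mul_left _))
    · rw [List.length_cons, pow_succ]
      linarith

/-- By injectivity modulo `4 * 5 ^ E`, a single solution `ν` of the congruence outside the range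
`[1100, N)` excludes all solutions inside it. -/
theorem fib_not_modEq {N E C i n ν : ℕ} (hN : N ≤ 4 * 5 ^ E)
    (hn : 1100 ≤ n) (hnN : n < N) (hni : n ≡ i [MOD 4])
    (hν : ν ≡ i [MOD 4] ∧ ν < 4 * 5 ^ E ∧ (ν < 1100 ∨ N ≤ ν) ∧ 9 * Nat.fib ν ≡ C [MOD 5 ^ E]) :
    ¬ 9 * Nat.fib n ≡ C [MOD 5 ^ E] := by
  intro h
  obtain ⟨h1, h2, h3, h4⟩ := hν
  have h5 : Nat.fib ν ≡ Nat.fib n [MOD 5 ^ E] :=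
    Nat.ModEq.cancel_left_of_coprime (by
      rw [Nat.Coprime.gcd_eq_one (Nat.Coprime.pow_left E (by norm_num))]) (h4.trans h.symm)
  have h6 := (Nat.modEq_iff_dvd.1 h5)
  push_cast at h6
  have h7 := fib_five_adic_injective (hni.trans h1.symm) h6
  have h8 := Nat.ModEq.eq_of_lt_of_lt h7 (hnN.trans_le hN) h2
  omega

/-- Runs `P i s F_i F_{i+1}` for the four classes `i` modulo `4`, where `s` is the constant used by
`fibLift`. -/
def allClasses (P : ℕ → ℕ → ℕ → ℕ → Bool) : Bool :=
  (P 0 2 0 1).and <| (P 1 4 1 1).and <| (P 2 3 1 2).and (P 3 1 2 3)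

/-- Checks `P k` for all `k < n`, in a form suitable for kernel reduction. -/
def allBelow (P : ℕ → Bool) (n : ℕ) : Bool :=
  Nat.rec true (fun k ih => forceNat k fun k => (P k).and ih) n

theorem allBelow_spec {P : ℕ → Bool} {n : ℕ} (h : allBelow P n = true) : ∀ k < n, P k = true := by
  induction n with
  | zero => intro k hk; omega
  | succ n ih =>
    have h' : (forceNat n fun k => (P k).and (allBelow P n)) = true := h
    rw [forceNat_eq, Bool.and_eq_true] at h'
    intro k hk
    rcases Nat.lt_succ_iff_lt_or_eq.1 hk with h1 | rfl
    · exact ih h'.2 k h1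
    · exact h'.1

theorem allClasses_spec {P : ℕ → ℕ → ℕ → ℕ → Bool} (h : allClasses P = true) (n : ℕ) :
    ∃ i s, i < 4 ∧ n ≡ i [MOD 4] ∧ P i s (Nat.fib i) (Nat.fib (i + 1)) = true := by
  simp only [allClasses, Bool.and_eq_true] at h
  obtain ⟨h0, h1, h2, h3⟩ := h
  have : n % 4 = 0 ∨ n % 4 = 1 ∨ n % 4 = 2 ∨ n % 4 = 3 := by omega
  rcases this with h | h | h | h
  exacts [⟨0, 2, by omega, h, h0⟩, ⟨1, 4, by omega, h, h1⟩, ⟨2, 3, by omega, h, h2⟩,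
    ⟨3, 1, by omega, h, h3⟩]

/-- Certifies that, for every digit `d`, no index `n` in `[1100, N)` satisfies `9 F_n ≡ -d` modulo
`M = 5 ^ E`. -/
def zCheck (N E M : ℕ) : Bool :=
  fibTable M (fun l => allBelow (fun d => allClasses fun i s a b =>
    forceNat (Nat.mod (Nat.sub M d) M) fun C => fibLift N M C s l 4 i a b) 10) E ⟨2, 3, 5⟩

theorem fibTriple_good (M : ℕ) : (⟨2, 3, 5⟩ : FibTriple).Good M 4 := ⟨3, rfl, rfl, rfl, rfl⟩

theorem zCheck_spec {N E M : ℕ} (hM : 5 ^ E = M) (hM9 : 9 ≤ M) (hN : N ≤ 4 * M)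
    (h : zCheck N E M = true) {n d : ℕ} (hd : d < 10) (hn : 1100 ≤ n) (hnN : n < N) :
    ¬ (5 : ℤ) ^ E ∣ 9 * (Nat.fib n : ℤ) + d := by
  subst hM
  intro hdvd
  obtain ⟨l, hl, hG, hK⟩ := fibTable_spec E 4 (fibTriple_good _) h
  obtain ⟨i, s, -, hni, hP⟩ := allClasses_spec (allBelow_spec hK d hd) n
  rw [forceNat_eq] at hP
  obtain ⟨ν, hν⟩ := fibLift_spec l hG (dvd_refl 4) rfl rfl hP
  rw [hl] at hν
  refine fib_not_modEq hN hn hnN hni hν ?_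
  refine Nat.ModEq.trans ?_ (Nat.mod_modEq _ _).symm
  refine (Nat.modEq_iff_dvd.2 ?_)
  rw [show Nat.sub (5 ^ E) d = 5 ^ E - d from rfl]
  push_cast [show d ≤ 5 ^ E by omega]
  rw [show (5 : ℤ) ^ E - d - 9 * Nat.fib n = 5 ^ E - (9 * (Nat.fib n : ℤ) + d) by ring]
  exact dvd_sub (dvd_refl _) hdvd

/-- Whether `F_n ≡ 7 d`, that is `9 F_n ≡ -d`, modulo `8` is possible for some `n` in the class
modulo `4` of `i`, where `(a, b) = (F_i, F_{i+1})`. As the period modulo `8` is `12`, it suffices to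
look at `i`, `i + 4` and `i + 8`. -/
def modEightOk (d a b : ℕ) : Bool :=
  (Nat.beq (Nat.mod a 8) (Nat.mod (Nat.mul 7 d) 8)).or <|
  (Nat.beq (Nat.mod (Nat.add (Nat.mul 2 a) (Nat.mul 3 b)) 8) (Nat.mod (Nat.mul 7 d) 8)).or
  (Nat.beq (Nat.mod (Nat.add (Nat.mul 13 a) (Nat.mul 21 b)) 8) (Nat.mod (Nat.mul 7 d) 8))

theorem modEightOk_of_dvd {n i d : ℕ} (hi : i < 4) (hni : n ≡ i [MOD 4])
    (h : (8 : ℤ) ∣ 9 * (Nat.fib n : ℤ) + d) : modEightOk d (Nat.fib i) (Nat.fib (i + 1)) = true := by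
  have hper : ∀ k j : ℕ, Nat.fib (j + 12 * k) ≡ Nat.fib j [MOD 8] := by
    intro k
    induction k with
    | zero => exact fun j => rfl
    | succ k ih =>
      intro j
      refine Nat.ModEq.trans ?_ (ih j)
      rw [show j + 12 * (k + 1) = j + 12 * k + 11 + 1 by ring, Nat.fib_add (j + 12 * k) 11,
        show Nat.fib 11 = 8 * 11 + 1 from rfl, show Nat.fib (11 + 1) = 8 * 18 from rfl]
      refine (Nat.modEq_iff_dvd.2 ⟨-11 * Nat.fib (j + 12 * k) - 18 * Nat.fib (j + 12 * k + 1), ?_⟩)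
      push_cast
      ring
  have h7 : Nat.fib n % 8 = 7 * d % 8 := by omega
  have h4 : Nat.fib (i + 4) = 2 * Nat.fib i + 3 * Nat.fib (i + 1) := by
    rw [show i + 4 = i + 3 + 1 from rfl, Nat.fib_add i 3, show Nat.fib 3 = 2 from rfl,
      show Nat.fib (3 + 1) = 3 from rfl]
    ring
  have h8 : Nat.fib (i + 8) = 13 * Nat.fib i + 21 * Nat.fib (i + 1) := by
    rw [show i + 8 = i + 7 + 1 from rfl, Nat.fib_add i 7, show Nat.fib 7 = 13 from rfl,
      show Nat.fib (7 + 1) = 21 from rfl]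
    ring
  have hn : n = n % 12 + 12 * (n / 12) := by omega
  have h9 := hper (n / 12) (n % 12)
  rw [← hn] at h9
  have h10 : n % 12 = i ∨ n % 12 = i + 4 ∨ n % 12 = i + 8 := by
    have : n % 4 = i % 4 := hni
    omega
  have h11 : modEightOk d (Nat.fib i) (Nat.fib (i + 1)) =
    ((Nat.beq (Nat.fib i % 8) (7 * d % 8)).or <|
    (Nat.beq ((2 * Nat.fib i + 3 * Nat.fib (i + 1)) % 8) (7 * d % 8)).or
    (Nat.beq ((13 * Nat.fib i + 21 * Nat.fib (i + 1)) % 8) (7 * d % 8))) := rfl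
  rw [h11, ← h4, ← h8]
  simp only [Bool.or_eq_true, Nat.beq_eq, ← h7]
  rcases h10 with h10 | h10 | h10 <;> rw [h10] at h9
  · exact Or.inl h9.symm
  · exact Or.inr (Or.inl h9.symm)
  · exact Or.inr (Or.inr h9.symm)

/-- Follows the lift of the congruence `9 F_ν ≡ -d`, with `C0` the residue of `-d`. At the level `p
= 10 ^ z` the remaining lift is carried out for each of the ten congruences `9 F_ν ≡ (d - d2) 10 ^ z
- d` modulo `M`, which agree with the first one so far. If `ok` is false, the levels `z ≥ 3` are
skipped, being excluded modulo `8`. -/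
def fibWalk (ok : Bool) (N M d s C0 : ℕ) (l : List FibTriple) : ℕ → ℕ → ℕ → ℕ → ℕ → Bool :=
  List.rec (motive := fun _ => ℕ → ℕ → ℕ → ℕ → ℕ → Bool)
    (fun _ _ _ _ _ => true)
    (fun g l ih q ν a b p =>
      ((ok.not.and (Nat.ble 1000 p)).or <|
        allBelow (fun d2 => forceNat (Nat.mod (Nat.add (Nat.mul d p)
        (Nat.mul (Nat.pred M) (Nat.add (Nat.mul d2 p) d))) M) fun C =>
          fibLift N M C s (g :: l) q ν a b) 10).and <|
      fibShift M g ν a b q (fun ν a b => forceNat (Nat.mul 10 p) fun p =>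
        forceNat ν fun ν => ih (Nat.mul 5 q) ν a b p)
        (Nat.mod (Nat.mul s (Nat.div (Nat.mul 4 (Nat.sub (Nat.add (Nat.mul 9 a) M) C0)) q)) 5)) l

/-- Certifies that for all digits `d2`, `d3` and all `z < E`, no index `n` in `[1100, N)` satisfies
`9 F_n ≡ (d3 - d2) 10 ^ z - d3` modulo `M = 5 ^ E`, given the congruence modulo `8` implied by the
last run when `z ≥ 3`. -/
def yCheck (N E M : ℕ) : Bool :=
  fibTable M (fun l => allBelow (fun d => allClasses fun i s a b =>
    forceNat (Nat.mod (Nat.sub M d) M) fun C =>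
      fibWalk (modEightOk d a b) N M d s C l 4 i a b 1) 10) E ⟨2, 3, 5⟩

theorem fibWalk_spec {ok : Bool} {N M d s C0 : ℕ} (l : List FibTriple) : ∀ {q ν a b p : ℕ},
    GoodTable M q l → 4 ∣ q → a ≡ Nat.fib ν [MOD M] → b ≡ Nat.fib (ν + 1) [MOD M] →
    fibWalk ok N M d s C0 l q ν a b p = true → ∀ j < l.length,
    (1000 ≤ p * 10 ^ j → ok = true) → ∀ d2 < 10,
    ∃ ν', ν' ≡ ν [MOD 4] ∧ ν' < q * 5 ^ l.length ∧ (ν' < 1100 ∨ N ≤ ν') ∧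
      9 * Nat.fib ν' ≡ d * (p * 10 ^ j) + (M - 1) * (d2 * (p * 10 ^ j) + d) [MOD M] := by
  induction l with
  | nil => intro q ν a b p _ _ _ _ _ j hj; simp at hj
  | cons g l ih =>
    intro q ν a b p hG hq ha hb h j hj hok d2 hd2
    have h' : (((ok.not.and (Nat.ble 1000 p)).or <|
        allBelow (fun d2 => forceNat ((d * p + (M - 1) * (d2 * p + d)) % M) fun C =>
          fibLift N M C s (g :: l) q ν a b) 10).and <|
      fibShift M g ν a b q (fun ν a b => forceNat (10 * p) fun p =>
        forceNat ν fun ν => fibWalk ok N M d s C0 l (5 * q) ν a b p)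
        (s * (4 * (9 * a + M - C0) / q) % 5)) = true := h
    rw [Bool.and_eq_true] at h'
    rcases j with - | j
    · have h0 := h'.1
      rw [Bool.or_eq_true] at h0
      have h1 := allBelow_spec (h0.resolve_left (by
        simp only [Bool.and_eq_true, Nat.ble_eq, Bool.not_eq_true', not_and]
        intro h2 h3
        simp [hok (by simpa using h3)] at h2)) d2 hd2
      rw [forceNat_eq] at h1
      obtain ⟨ν', h2, h3, h4, h5⟩ := fibLift_spec _ hG hq ha hb h1
      refine ⟨ν', h2, h3, h4, h5.trans ?_⟩
      simpa using Nat.mod_modEq _ _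
    · obtain ⟨a', b', ha', hb', hK⟩ := fibShift_spec (M := M) (g := g) _ ν ha hb h'.2 _ hG.1
      rw [forceNat_eq, forceNat_eq] at hK
      obtain ⟨ν', h1, h2, h3, h4⟩ := ih hG.2 (hq.mul_left 5) ha' hb' hK j (by simpa using hj)
        (fun h => hok (by rw [pow_succ]; linarith)) d2 hd2
      refine ⟨ν', h1.trans ?_, ?_, h3, ?_⟩
      · simpa using (Nat.ModEq.refl ν).add (Nat.modEq_zero_iff_dvd.2 (hq.mul_left _))
      · rw [List.length_cons, pow_succ]
        linarith
      · rw [show p * 10 ^ (j + 1) = 10 * p * 10 ^ j by ring]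
        exact h4

theorem yCheck_spec {N E M : ℕ} (hM : 5 ^ E = M) (hN : N ≤ 4 * M)
    (h : yCheck N E M = true) {n z d2 d3 : ℕ} (hd2 : d2 < 10) (hd : d3 < 10) (hz : z < E)
    (hn : 1100 ≤ n) (hnN : n < N) (h8 : 3 ≤ z → (8 : ℤ) ∣ 9 * (Nat.fib n : ℤ) + d3) :
    ¬ (5 : ℤ) ^ E ∣ 9 * (Nat.fib n : ℤ) - (((d3 : ℤ) - d2) * 10 ^ z - d3) := by
  subst hM
  intro hdvd
  obtain ⟨l, hl, hG, hK⟩ := fibTable_spec E 4 (fibTriple_good _) h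
  obtain ⟨i, s, hi, hni, hP⟩ := allClasses_spec (allBelow_spec hK d3 hd) n
  rw [forceNat_eq] at hP
  obtain ⟨ν, hν⟩ := fibWalk_spec l hG (dvd_refl 4) rfl rfl hP z (hl ▸ hz)
    (fun hz => modEightOk_of_dvd hi hni (h8 (by
      rw [one_mul, show 1000 = 10 ^ 3 by norm_num] at hz
      exact (Nat.pow_le_pow_iff_right (by norm_num)).1 hz))) d2 hd2
  rw [hl] at hν
  refine fib_not_modEq hN hn hnN hni hν ?_
  refine (Nat.modEq_iff_dvd.2 ?_)
  push_cast [show 1 ≤ 5 ^ E from Nat.one_le_pow _ _ (by norm_num)]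
  have : (d3 * (1 * 10 ^ z) + (5 ^ E - 1) * (d2 * (1 * 10 ^ z) + d3) - 9 * (Nat.fib n : ℤ) : ℤ) =
    5 ^ E * (d2 * 10 ^ z + d3) - (9 * (Nat.fib n : ℤ) - (((d3 : ℤ) - d2) * 10 ^ z - d3)) := by ring
  rw [this]
  exact dvd_sub (Dvd.intro _ rfl) hdvd

theorem zCheck_big : zCheck (2 ^ 530) 230 (5 ^ 230) = true := by decide +kernel

theorem zCheck_mid : zCheck (2 ^ 87) 39 (5 ^ 39) = true := by decide +kernel

theorem zCheck_small : zCheck (2 ^ 72) 36 (5 ^ 36) = true := by decide +kernel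

/-- The numerals are `2 ^ 72`, `36` and `5 ^ 36`. -/
theorem yCheck_small : yCheck 4722366482869645213696 36 14551915228366851806640625 =
    true := by decide +kernel

/-! ### Counting decimal runs -/

/-- `N` is a concatenation of `k` decimal runs; runs may be empty and may consist of zeros. -/
def HasRuns : ℕ → ℕ → Prop
  | 0, N => N = 0
  | k + 1, N => ∃ d l M, d < 10 ∧ HasRuns k M ∧ N = M * 10 ^ l + d * ((10 ^ l - 1) / 9)

theorem repunit_succ (l : ℕ) : (10 ^ (l + 1) - 1) / 9 = 10 * ((10 ^ l - 1) / 9) + 1 := by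
  have h : ∀ l : ℕ, ∃ r, 10 ^ l = 9 * r + 1 := by
    intro l
    induction l with
    | zero => exact ⟨0, rfl⟩
    | succ l ih =>
      obtain ⟨r, hr⟩ := ih
      exact ⟨10 * r + 1, by rw [pow_succ, hr]; ring⟩
  obtain ⟨r, hr⟩ := h l
  rw [pow_succ, hr]
  omega

theorem run_div_mod {d l M N : ℕ} (hd : d < 10)
    (h : N = M * 10 ^ (l + 1) + d * ((10 ^ (l + 1) - 1) / 9)) :
    N % 10 = d ∧ N / 10 = M * 10 ^ l + d * ((10 ^ l - 1) / 9) := by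
  rw [repunit_succ, pow_succ] at h
  have h' : N = 10 * (M * 10 ^ l + d * ((10 ^ l - 1) / 9)) + d := by rw [h]; ring
  omega

theorem HasRuns.div_ten {k N : ℕ} (h : HasRuns k N) : HasRuns k (N / 10) := by
  induction k generalizing N with
  | zero => rw [HasRuns] at h ⊢; omega
  | succ k ih =>
    obtain ⟨d, l, M, hd, hM, hN⟩ := h
    rcases l with - | l
    · exact ⟨d, 0, M / 10, hd, ih hM, by simp at hN ⊢; rw [hN]⟩
    · exact ⟨d, l, M, hd, hM, (run_div_mod hd hN).2⟩

theorem HasRuns.succ_div_ten {k N : ℕ} (h : HasRuns (k + 1) N) :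
    ∃ l M, HasRuns k M ∧ N / 10 = M * 10 ^ l + N % 10 * ((10 ^ l - 1) / 9) := by
  obtain ⟨d, l, M, hd, hM, hN⟩ := h
  rcases l with - | l
  · exact ⟨0, M / 10, hM.div_ten, by simp at hN ⊢; rw [hN]⟩
  · obtain ⟨h1, h2⟩ := run_div_mod hd hN
    exact ⟨l, M, hM, by rw [h1, h2]⟩

/-- If true, `N` is not a concatenation of `k` runs followed by a (possibly empty) run of the digit
`d`. The digits are read from the right; a change of digit starts a new run. -/
def manyRuns (fuel : ℕ) : ℕ → ℕ → ℕ → Bool :=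
  Nat.rec (motive := fun _ => ℕ → ℕ → ℕ → Bool) (fun _ _ _ => false)
    (fun _ ih k d N => forceNat N fun N =>
      (Nat.ble 1 N).and <|
      cond (Nat.beq (Nat.mod N 10) d) (ih k d (Nat.div N 10)) <|
      Nat.rec (motive := fun _ => Bool) true (fun k _ => ih k (Nat.mod N 10) (Nat.div N 10)) k) fuel

theorem manyRuns_spec (fuel : ℕ) : ∀ {k d N : ℕ}, d < 10 → manyRuns fuel k d N = true →
    ¬ ∃ l M, HasRuns k M ∧ N = M * 10 ^ l + d * ((10 ^ l - 1) / 9) := by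
  induction fuel with
  | zero => intro k d N hd h; exact absurd (show false = true from h) (by decide)
  | succ fuel ih =>
    rintro k d N hd h ⟨l, M, hM, hN⟩
    have h' : (forceNat N fun N =>
      (Nat.ble 1 N).and <|
      cond (Nat.beq (N % 10) d) (manyRuns fuel k d (N / 10)) <|
      Nat.rec (motive := fun _ => Bool) true
        (fun k _ => manyRuns fuel k (N % 10) (N / 10)) k) = true := h
    rw [forceNat_eq, Bool.and_eq_true, Nat.ble_eq] at h'
    obtain ⟨h0, h1⟩ := h'
    by_cases hd' : N % 10 = d
    · rw [show Nat.beq (N % 10) d = true from Nat.beq_eq ▸ hd', cond_true] at h1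
      refine ih hd h1 ?_
      rcases l with - | l
      · simp only [pow_zero, mul_one, Nat.sub_self, Nat.zero_div, mul_zero, add_zero] at hN
        exact ⟨0, N / 10, (hN ▸ hM).div_ten, by simp⟩
      · exact ⟨l, M, hM, (run_div_mod hd hN).2⟩
    · have : Nat.beq (N % 10) d = false := by
        rw [← Bool.not_eq_true, Nat.beq_eq]; exact hd'
      rw [this, cond_false] at h1
      rcases l with - | l
      · simp only [pow_zero, mul_one, Nat.sub_self, Nat.zero_div, mul_zero, add_zero] at hN
        rw [← hN] at hM
        rcases k with - | k
        · rw [HasRuns] at hM; omega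
        · exact ih (Nat.mod_lt _ (by norm_num)) h1 hM.succ_div_ten
      · exact hd' (run_div_mod hd hN).1

/-- Certifies that `n` consecutive Fibonacci numbers, starting with `a` and `b`, have more than
three runs. -/
def fibScan (n : ℕ) : ℕ → ℕ → Bool :=
  Nat.rec (motive := fun _ => ℕ → ℕ → Bool) (fun _ _ => true)
    (fun _ ih a b => (manyRuns 300 2 (Nat.mod a 10) (Nat.div a 10)).and <|
      forceNat (Nat.add a b) fun c => ih b c) n

theorem fibScan_spec (n : ℕ) : ∀ {m : ℕ}, fibScan n (Nat.fib m) (Nat.fib (m + 1)) = true →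
    ∀ k < n, ¬ HasRuns 3 (Nat.fib (m + k)) := by
  induction n with
  | zero => intro m _ k hk; omega
  | succ n ih =>
    intro m h k hk hR
    have h' : ((manyRuns 300 2 (Nat.fib m % 10) (Nat.fib m / 10)).and <|
      forceNat (Nat.fib m + Nat.fib (m + 1)) fun c => fibScan n (Nat.fib (m + 1)) c) = true := h
    rw [forceNat_eq, Bool.and_eq_true, ← Nat.fib_add_two] at h'
    rcases k with - | k
    · exact manyRuns_spec _ (Nat.mod_lt _ (by norm_num)) h'.1 hR.succ_div_ten
    · exact ih h'.2 k (by omega) (by convert hR using 2; ring)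

theorem not_hasRuns_fib {n : ℕ} (h : 22 < n) (h' : n < 1100) : ¬ HasRuns 3 (Nat.fib n) := by
  have h1 : fibScan 1077 (Nat.fib 23) (Nat.fib (23 + 1)) = true := by decide +kernel
  have := fibScan_spec 1077 h1 (n - 23) (by omega)
  rwa [show 23 + (n - 23) = n by omega] at this

/-! ### Approximation of logarithms -/

/-- The series `∑ Q ^ (-j) / (2 j + 1)`; for `Q = x⁻²` it equals `artanh x / x`. -/
noncomputable def atanhSeries (Q : ℝ) : ℝ := ∑' j : ℕ, 1 / ((2 * j + 1) * Q ^ j)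

theorem hasSum_atanhSeries {Q x : ℝ} (hx : 0 < x) (hx1 : x < 1) (hQ : Q * x ^ 2 = 1) :
    HasSum (fun j : ℕ => 1 / ((2 * j + 1) * Q ^ j)) (atanhSeries Q) ∧
      Real.log (1 + x) - Real.log (1 - x) = 2 * x * atanhSeries Q := by
  have h := Real.hasSum_log_sub_log_of_abs_lt_one (abs_lt.2 ⟨by linarith, hx1⟩)
  have hQ0 : Q ≠ 0 := by rintro rfl; simp at hQ
  have e : ∀ j : ℕ, (2 : ℝ) * (1 / (2 * j + 1)) * x ^ (2 * j + 1) =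
      2 * x * (1 / ((2 * j + 1) * Q ^ j)) := by
    intro j
    have h1 : x ^ (2 * j) * Q ^ j = 1 := by rw [pow_mul, ← mul_pow, mul_comm, hQ, one_pow]
    have h2 : (2 * j + 1 : ℝ) ≠ 0 := by positivity
    field_simp
    rw [pow_succ]
    linear_combination x * h1
  simp only [e] at h
  have h1 : Summable (fun j : ℕ => 1 / ((2 * j + 1) * Q ^ j)) :=
    (summable_mul_left_iff (by positivity : (2 * x) ≠ 0)).1 h.summable
  exact ⟨h1.hasSum, h.unique (h1.hasSum.mul_left (2 * x))⟩

/-- The sum of `N` rounded terms of the series: with the starting values `t` and `m` it is the sum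
of `⌊t / (Q ^ j (m + 2 j))⌋` over `j < N`. -/
def atanhFloor (Q : ℕ) (N : ℕ) : ℕ → ℕ → ℕ :=
  Nat.rec (motive := fun _ => ℕ → ℕ → ℕ) (fun _ _ => 0)
    (fun _ ih t m => t / m + ih (t / Q) (m + 2)) N

theorem atanhFloor_eq (Q N : ℕ) : ∀ t m : ℕ,
    atanhFloor Q N t m = ∑ j ∈ Finset.range N, t / (Q ^ j * (m + 2 * j)) := by
  induction N with
  | zero => intro t m; rfl
  | succ N ih =>
    intro t m
    have : atanhFloor Q (N + 1) t m = t / m + atanhFloor Q N (t / Q) (m + 2) := rfl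
    rw [this, ih, Finset.sum_range_succ', add_comm]
    congr 1
    · refine Finset.sum_congr rfl fun j _ => ?_
      rw [Nat.div_div_eq_div_mul, pow_succ]
      congr 1
      ring
    · simp

theorem atanhSeries_bound {Q N S : ℕ} (hQ : 2 ≤ Q) (hN : 2 * S ≤ Q ^ N)
    (hs : HasSum (fun j : ℕ => 1 / ((2 * j + 1) * (Q : ℝ) ^ j)) (atanhSeries Q)) :
    (atanhFloor Q N S 1 : ℝ) ≤ S * atanhSeries Q ∧
      S * atanhSeries Q ≤ atanhFloor Q N S 1 + N + 1 := by
  have hQ' : (2 : ℝ) ≤ Q := by exact_mod_cast hQ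
  have h1 := hs.summable.sum_add_tsum_nat_add N
  rw [hs.tsum_eq] at h1
  have h2 : (0 : ℝ) ≤ ∑' j : ℕ, 1 / ((2 * ((j + N : ℕ) : ℝ) + 1) * (Q : ℝ) ^ (j + N)) :=
    tsum_nonneg fun j => by positivity
  have h3 : ∑' j : ℕ, 1 / ((2 * ((j + N : ℕ) : ℝ) + 1) * (Q : ℝ) ^ (j + N)) ≤
      2 / (Q : ℝ) ^ N := by
    have hg : HasSum (fun j : ℕ => (1 / (Q : ℝ) ^ N) * (1 / 2 : ℝ) ^ j) (2 / (Q : ℝ) ^ N) := by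
      have := hasSum_geometric_two.mul_left (1 / (Q : ℝ) ^ N)
      rwa [one_div_mul_eq_div] at this
    refine hasSum_le (fun j => ?_) ((summable_nat_add_iff N).2 hs.summable).hasSum hg
    rw [one_div_pow, one_div_mul_one_div, pow_add, mul_comm ((Q : ℝ) ^ j)]
    have h4 : (2 : ℝ) ^ j ≤ (Q : ℝ) ^ j := by gcongr
    apply one_div_le_one_div_of_le (by positivity)
    have h5 : (Q : ℝ) ^ N * 2 ^ j ≤ (Q : ℝ) ^ N * (Q : ℝ) ^ j := by gcongr
    refine h5.trans (le_mul_of_one_le_left (by positivity) ?_)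
    have : (0 : ℝ) ≤ ((j + N : ℕ) : ℝ) := by positivity
    linarith
  have h4 : (S : ℝ) * (2 / (Q : ℝ) ^ N) ≤ 1 := by
    rw [mul_div_assoc', div_le_one (by positivity)]
    have : (2 * S : ℝ) ≤ (Q : ℝ) ^ N := by exact_mod_cast hN
    linarith
  have hterm : ∀ j : ℕ, ((S / (Q ^ j * (1 + 2 * j)) : ℕ) : ℝ) ≤
      S * (1 / ((2 * j + 1) * (Q : ℝ) ^ j)) ∧ S * (1 / ((2 * j + 1) * (Q : ℝ) ^ j)) ≤
      ((S / (Q ^ j * (1 + 2 * j)) : ℕ) : ℝ) + 1 := by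
    intro j
    have e : (S : ℝ) * (1 / ((2 * j + 1) * (Q : ℝ) ^ j)) =
        (S : ℝ) / ((Q ^ j * (1 + 2 * j) : ℕ) : ℝ) := by
      push_cast
      rw [mul_one_div, mul_comm ((Q : ℝ) ^ j), add_comm]
    rw [e]
    exact ⟨Nat.cast_div_le, (Nat.lt_succ_floor _).le.trans (by
      rw [Nat.floor_div_eq_div]; push_cast; exact le_rfl)⟩
  have h5 : (atanhFloor Q N S 1 : ℝ) ≤
      S * ∑ j ∈ Finset.range N, 1 / ((2 * j + 1) * (Q : ℝ) ^ j) := by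
    rw [atanhFloor_eq, Finset.mul_sum]
    push_cast
    exact Finset.sum_le_sum fun j _ => by exact_mod_cast (hterm j).1
  have h6 : S * ∑ j ∈ Finset.range N, 1 / ((2 * j + 1) * (Q : ℝ) ^ j) ≤
      (atanhFloor Q N S 1 : ℝ) + N := by
    rw [atanhFloor_eq, Finset.mul_sum]
    calc _ ≤ ∑ j ∈ Finset.range N, (((S / (Q ^ j * (1 + 2 * j)) : ℕ) : ℝ) + 1) :=
          Finset.sum_le_sum fun j _ => (hterm j).2
      _ = _ := by rw [Finset.sum_add_distrib]; simp
  have h7 : (0 : ℝ) ≤ S := by positivity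
  rw [← h1, mul_add]
  have h8 := mul_nonneg h7 h2
  have h9 := (mul_le_mul_of_nonneg_left h3 h7).trans h4
  exact ⟨by linarith, by linarith⟩

/-- Scale of the fixed-point approximations. -/
def logScale : ℕ := 10 ^ 335

/-- The integer part of `10 ^ 335 * √5`. -/
def sqrtFiveApprox : ℕ :=
  223606797749978969640917366873127623544061835961152572427089724541052092563780489941441440837878227496950817615077378350425326772444707386358636012153345270886677817319187916581127664532263985658053576135041753378500342339241406444208643253909725259262722887629951740244068161177590890949849237139072972889848208864154268989409913169357

/-- From `log 2 = 2 artanh (1/3)`. -/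
def logTwoApprox : ℕ := 2 * atanhFloor 9 352 logScale 1 / 3

/-- From `log (3/2) = 2 artanh (1/5)`. -/
def logThreeApprox : ℕ := logTwoApprox + 2 * atanhFloor 25 240 logScale 1 / 5

/-- From `log (5/4) = 2 artanh (1/9)`. -/
def logFiveApprox : ℕ := 2 * logTwoApprox + 2 * atanhFloor 81 176 logScale 1 / 9

/-- From `log (8/7) = 2 artanh (1/15)`. -/
def logSevenApprox : ℕ := 3 * logTwoApprox - 2 * atanhFloor 225 143 logScale 1 / 15

/-- From `log φ = artanh (1/√5)`, with `φ` the golden ratio. -/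
def logGoldenApprox : ℕ := atanhFloor 5 480 logScale 1 * sqrtFiveApprox / (5 * logScale)

theorem logTwoApprox_spec : |(logScale : ℝ) * Real.log 2 - logTwoApprox| ≤ 300 := by
  obtain ⟨h1, h2⟩ := hasSum_atanhSeries (Q := (9 : ℕ)) (x := 1 / 3) (by norm_num) (by norm_num)
    (by norm_num)
  obtain ⟨h3, h4⟩ := atanhSeries_bound (S := logScale) (N := 352) (by norm_num)
    (by decide +kernel) h1
  have h5 : Real.log (1 + 1 / 3) - Real.log (1 - 1 / 3) = Real.log 2 := by
    rw [← Real.log_div (by norm_num) (by norm_num)]; norm_num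
  rw [h5] at h2
  rw [h2]
  have h6 : 3 * logTwoApprox ≤ 2 * atanhFloor 9 352 logScale 1 ∧
      2 * atanhFloor 9 352 logScale 1 < 3 * logTwoApprox + 3 := by
    rw [logTwoApprox]; omega
  have h7 : (3 : ℝ) * logTwoApprox ≤ 2 * atanhFloor 9 352 logScale 1 := by exact_mod_cast h6.1
  have h8 : (2 : ℝ) * atanhFloor 9 352 logScale 1 < 3 * logTwoApprox + 3 := by exact_mod_cast h6.2
  push_cast at h3 h4 ⊢
  rw [abs_le]
  constructor <;> linarith

theorem logThreeApprox_spec : |(logScale : ℝ) * Real.log 3 - logThreeApprox| ≤ 500 := by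
  obtain ⟨h1, h2⟩ := hasSum_atanhSeries (Q := (25 : ℕ)) (x := 1 / 5) (by norm_num) (by norm_num)
    (by norm_num)
  obtain ⟨h3, h4⟩ := atanhSeries_bound (S := logScale) (N := 240) (by norm_num)
    (by decide +kernel) h1
  have h5 : Real.log (1 + 1 / 5) - Real.log (1 - 1 / 5) = Real.log 3 - Real.log 2 := by
    rw [← Real.log_div (by norm_num) (by norm_num), ← Real.log_div (by norm_num) (by norm_num)]
    norm_num
  rw [h5, sub_eq_iff_eq_add] at h2
  rw [h2]
  have h6 : 5 * logThreeApprox ≤ 5 * logTwoApprox + 2 * atanhFloor 25 240 logScale 1 ∧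
      5 * logTwoApprox + 2 * atanhFloor 25 240 logScale 1 < 5 * logThreeApprox + 5 := by
    rw [logThreeApprox]; omega
  have h7 : (5 : ℝ) * logThreeApprox ≤ 5 * logTwoApprox + 2 * atanhFloor 25 240 logScale 1 := by
    exact_mod_cast h6.1
  have h8 : (5 : ℝ) * logTwoApprox + 2 * atanhFloor 25 240 logScale 1 < 5 * logThreeApprox + 5 := by
    exact_mod_cast h6.2
  have h9 := abs_le.1 logTwoApprox_spec
  push_cast at h3 h4 ⊢
  rw [abs_le]
  constructor <;> linarith [h9.1, h9.2]

theorem logFiveApprox_spec : |(logScale : ℝ) * Real.log 5 - logFiveApprox| ≤ 800 := by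
  obtain ⟨h1, h2⟩ := hasSum_atanhSeries (Q := (81 : ℕ)) (x := 1 / 9) (by norm_num) (by norm_num)
    (by norm_num)
  obtain ⟨h3, h4⟩ := atanhSeries_bound (S := logScale) (N := 176) (by norm_num)
    (by decide +kernel) h1
  have h5 : Real.log (1 + 1 / 9) - Real.log (1 - 1 / 9) = Real.log 5 - 2 * Real.log 2 := by
    rw [show (2 : ℝ) * Real.log 2 = Real.log (2 ^ 2) by rw [Real.log_pow]; norm_num,
      ← Real.log_div (by norm_num) (by norm_num), ← Real.log_div (by norm_num) (by norm_num)]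
    norm_num
  rw [h5, sub_eq_iff_eq_add] at h2
  rw [h2]
  have h6 : 9 * logFiveApprox ≤ 18 * logTwoApprox + 2 * atanhFloor 81 176 logScale 1 ∧
      18 * logTwoApprox + 2 * atanhFloor 81 176 logScale 1 < 9 * logFiveApprox + 9 := by
    rw [logFiveApprox]; omega
  have h7 : (9 : ℝ) * logFiveApprox ≤ 18 * logTwoApprox + 2 * atanhFloor 81 176 logScale 1 := by
    exact_mod_cast h6.1
  have h8 : (18 : ℝ) * logTwoApprox + 2 * atanhFloor 81 176 logScale 1 < 9 * logFiveApprox + 9 := by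
    exact_mod_cast h6.2
  have h9 := abs_le.1 logTwoApprox_spec
  push_cast at h3 h4 ⊢
  rw [abs_le]
  constructor <;> linarith [h9.1, h9.2]

theorem logSevenApprox_spec : |(logScale : ℝ) * Real.log 7 - logSevenApprox| ≤ 1000 := by
  obtain ⟨h1, h2⟩ := hasSum_atanhSeries (Q := (225 : ℕ)) (x := 1 / 15) (by norm_num) (by norm_num)
    (by norm_num)
  obtain ⟨h3, h4⟩ := atanhSeries_bound (S := logScale) (N := 143) (by norm_num)
    (by decide +kernel) h1
  have h5 : Real.log (1 + 1 / 15) - Real.log (1 - 1 / 15) = 3 * Real.log 2 - Real.log 7 := by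
    rw [show (3 : ℝ) * Real.log 2 = Real.log (2 ^ 3) by rw [Real.log_pow]; norm_num,
      ← Real.log_div (by norm_num) (by norm_num), ← Real.log_div (by norm_num) (by norm_num)]
    norm_num
  rw [h5] at h2
  have h2' : Real.log 7 = 3 * Real.log 2 - 2 * (1 / 15) * atanhSeries (225 : ℕ) := by linarith
  rw [h2']
  have hle : 2 * atanhFloor 225 143 logScale 1 / 15 ≤ 3 * logTwoApprox := by decide +kernel
  have h6 : 15 * logSevenApprox + 2 * atanhFloor 225 143 logScale 1 < 45 * logTwoApprox + 15 ∧
      45 * logTwoApprox ≤ 15 * logSevenApprox + 2 * atanhFloor 225 143 logScale 1 := by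
    rw [logSevenApprox]; omega
  have h7 : (15 : ℝ) * logSevenApprox + 2 * atanhFloor 225 143 logScale 1 <
      45 * logTwoApprox + 15 := by exact_mod_cast h6.1
  have h8 : (45 : ℝ) * logTwoApprox ≤
      15 * logSevenApprox + 2 * atanhFloor 225 143 logScale 1 := by exact_mod_cast h6.2
  have h9 := abs_le.1 logTwoApprox_spec
  push_cast at h3 h4 ⊢
  rw [abs_le]
  constructor <;> linarith [h9.1, h9.2]

theorem sqrtFiveApprox_spec : (sqrtFiveApprox : ℝ) ≤ logScale * √5 ∧
    logScale * √5 ≤ sqrtFiveApprox + 1 := by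
  have h1 : sqrtFiveApprox ^ 2 ≤ 5 * logScale ^ 2 := by decide +kernel
  have h2 : 5 * logScale ^ 2 ≤ (sqrtFiveApprox + 1) ^ 2 := by decide +kernel
  have h3 : (sqrtFiveApprox : ℝ) ^ 2 ≤ 5 * logScale ^ 2 := by exact_mod_cast h1
  have h4 : (5 : ℝ) * logScale ^ 2 ≤ (sqrtFiveApprox + 1) ^ 2 := by exact_mod_cast h2
  have h5 : ((logScale : ℝ) * √5) ^ 2 = 5 * logScale ^ 2 := by
    rw [mul_pow, Real.sq_sqrt (by norm_num)]; ring
  rw [← h5] at h3 h4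
  exact ⟨le_of_sq_le_sq h3 (by positivity), le_of_sq_le_sq h4 (by positivity)⟩

theorem log_one_add_inv_sqrt_five :
    Real.log (1 + 1 / √5) - Real.log (1 - 1 / √5) = 2 * Real.log Real.goldenRatio := by
  have h5 : (0 : ℝ) < √5 := by positivity
  have hsq : √5 ^ 2 = (5 : ℝ) := Real.sq_sqrt (by norm_num)
  have h1 : (1 : ℝ) < √5 := by nlinarith
  have h2 : 1 / √5 < 1 := by rwa [div_lt_one h5]
  have h3 : 0 < 1 / √5 := by positivity
  rw [← Real.log_div (by linarith) (by linarith),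
    show (2 : ℝ) * Real.log Real.goldenRatio = Real.log (Real.goldenRatio ^ 2) by
      rw [Real.log_pow]; norm_num]
  congr 1
  rw [div_eq_iff (by linarith), Real.goldenRatio]
  field_simp
  linear_combination (-(√5 + 1)) * hsq

theorem golden_product_bound {S H X r g L : ℝ} (hS : 0 < S) (hH : 0 ≤ H) (hHS : H ≤ 2 * S)
    (h3 : H ≤ X) (h4 : X ≤ H + 480 + 1) (hr : 0 ≤ r) (h6 : r ≤ S * √5) (h7 : S * √5 ≤ r + 1)
    (hL : 5 * S * L = X * (S * √5)) (h12 : 5 * S * g ≤ H * r) (h13 : H * r < 5 * S * (g + 1)) :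
    |L - g| ≤ 500 := by
  have hsq : √5 * √5 = (5 : ℝ) := Real.mul_self_sqrt (by norm_num)
  have hlt3 : √5 < (3 : ℝ) := by nlinarith
  have h14 : H * r ≤ X * (S * √5) := mul_le_mul h3 h6 hr (hH.trans h3)
  have h15 : X * (S * √5) ≤ H * r + 481 * (3 * S) + 2 * S := by
    have h16 : X * (S * √5) ≤ (H + 481) * (S * √5) :=
      mul_le_mul_of_nonneg_right (by linarith) (by positivity)
    have h17 : H * (S * √5) ≤ H * (r + 1) := mul_le_mul_of_nonneg_left h7 hH
    have h18 : S * √5 ≤ S * 3 := mul_le_mul_of_nonneg_left hlt3.le hS.le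
    nlinarith
  rw [← hL] at h14 h15
  rw [abs_le]
  constructor
  · have : 5 * S * g ≤ 5 * S * L := by linarith
    have := le_of_mul_le_mul_left this (by positivity)
    linarith
  · have : 5 * S * L ≤ 5 * S * (g + 500) := by linarith
    have := le_of_mul_le_mul_left this (by positivity)
    linarith

theorem logGoldenApprox_spec :
    |(logScale : ℝ) * Real.log Real.goldenRatio - logGoldenApprox| ≤ 500 := by
  have h5 : (0 : ℝ) < √5 := by positivity
  have hsq : √5 * √5 = (5 : ℝ) := Real.mul_self_sqrt (by norm_num)
  have hlt : (1 : ℝ) < √5 := by nlinarith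
  obtain ⟨h1, h2⟩ := hasSum_atanhSeries (Q := (5 : ℕ)) (x := 1 / √5) (by positivity)
    (by rwa [div_lt_one h5]) (by rw [div_pow, one_pow, sq, hsq]; norm_num)
  obtain ⟨h3, h4⟩ := atanhSeries_bound (S := logScale) (N := 480) (by norm_num)
    (by decide +kernel) h1
  rw [log_one_add_inv_sqrt_five] at h2
  have hS : 0 < logScale := by decide +kernel
  have hle : atanhFloor 5 480 logScale 1 ≤ 2 * logScale := by decide +kernel
  have h10 : 5 * logScale * logGoldenApprox ≤ atanhFloor 5 480 logScale 1 * sqrtFiveApprox := by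
    rw [logGoldenApprox]; exact Nat.mul_div_le _ _
  have h11 : atanhFloor 5 480 logScale 1 * sqrtFiveApprox <
      5 * logScale * (logGoldenApprox + 1) := by
    rw [logGoldenApprox]; exact Nat.lt_mul_div_succ _ (by omega)
  obtain ⟨h6, h7⟩ := sqrtFiveApprox_spec
  generalize logScale = S at *
  generalize atanhFloor 5 480 S 1 = H at *
  generalize sqrtFiveApprox = r at *
  generalize logGoldenApprox = g at *
  refine golden_product_bound (S := S) (H := H) (X := S * atanhSeries (5 : ℕ))
    (r := r) (Nat.cast_pos.2 hS) (Nat.cast_nonneg H) (by exact_mod_cast hle) h3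
    (by exact_mod_cast h4) (Nat.cast_nonneg _) h6 h7 ?_ (by exact_mod_cast h10) (by exact_mod_cast h11)
  have : √5 * (1 / √5) = 1 := by field_simp
  have h8 : Real.log Real.goldenRatio * 5 = √5 * atanhSeries (5 : ℕ) := by
    linear_combination (5 / 2) * h2 - (1 / √5) * atanhSeries (5 : ℕ) * hsq +
      √5 * atanhSeries (5 : ℕ) * this
  linear_combination (S ^ 2 : ℝ) * h8

/-! ### Baker–Davenport reduction -/

/-- Baker–Davenport reduction in integer arithmetic. Let `VA`, `VT`, `Vl` approximate `S A`, `S T`,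
`S l` to within `e`. If `p / q` is close to `A / T`, then `q (n A - x T + l)` is close to `q l + K
T` with `K = n p - x q`; the hypotheses `h1` and `h2` say that `-q l / T` lies well inside `(k, k +
1)`, so the form cannot be small. -/
theorem no_small_linear_form {A T l : ℝ} {S q p k VA VT Vl N D e : ℤ} (hT : 0 < T)
    (hq : 0 ≤ q) (hp : 0 ≤ p) (hS : 0 ≤ S)
    (hA : |S * A - VA| ≤ e) (hTT : |S * T - VT| ≤ e) (hl : |S * l - Vl| ≤ e)
    (h1 : k * VT + q * Vl + (|k| + q) * e + N * (|q * VA - p * VT| + (q + p) * e) + D < 0)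
    (h2 : 0 < (k + 1) * VT + q * Vl - (|k + 1| + q) * e -
      N * (|q * VA - p * VT| + (q + p) * e) - D)
    {n x : ℕ} (hn : (n : ℤ) ≤ N) (hΛ : q * S * |n * A - x * T + l| ≤ D) : False := by
  have hq' : (0 : ℝ) ≤ q := by exact_mod_cast hq
  have hp' : (0 : ℝ) ≤ p := by exact_mod_cast hp
  have hS' : (0 : ℝ) ≤ S := by exact_mod_cast hS
  have hn' : (n : ℝ) ≤ N := by exact_mod_cast hn
  have h1' : (k * VT + q * Vl + (|(k : ℝ)| + q) * e +
      N * (|(q * VA - p * VT : ℝ)| + (q + p) * e) + D : ℝ) < 0 := by exact_mod_cast h1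
  have h2' : (0 : ℝ) < (k + 1) * VT + q * Vl - (|(k + 1 : ℝ)| + q) * e -
      N * (|(q * VA - p * VT : ℝ)| + (q + p) * e) - D := by exact_mod_cast h2
  have he : (0 : ℝ) ≤ e := (abs_nonneg _).trans hA
  have hσ : |S * (q * A - p * T)| ≤ |(q * VA - p * VT : ℝ)| + (q + p) * e := by
    have e1 : S * (q * A - p * T) = (q * VA - p * VT : ℝ) + (q * (S * A - VA) - p * (S * T - VT)) := by
      ring
    rw [e1]
    refine (abs_add_le _ _).trans (add_le_add le_rfl ((abs_sub _ _).trans ?_))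
    rw [abs_mul, abs_mul, abs_of_nonneg hq', abs_of_nonneg hp', add_mul]
    gcongr
  have hnσ : |n * (S * (q * A - p * T))| ≤ N * (|(q * VA - p * VT : ℝ)| + (q + p) * e) := by
    rw [abs_mul, Nat.abs_cast]
    gcongr
    exact (Nat.cast_nonneg n).trans hn'
  have hql : |q * (S * l - Vl)| ≤ q * e := by
    rw [abs_mul, abs_of_nonneg hq']
    gcongr
  have hkT : ∀ j : ℝ, |j * (S * T - VT)| ≤ |j| * e := by
    intro j
    rw [abs_mul]
    gcongr
  have hΛ' : |q * S * (n * A - x * T + l)| ≤ D := by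
    rwa [abs_mul, abs_of_nonneg (mul_nonneg hq' hS')]
  set K : ℤ := n * p - x * q with hK
  have hKr : (K : ℝ) = n * p - x * q := by rw [hK]; push_cast; ring
  have key : q * S * (n * A - x * T + l) =
      S * T * K + n * (S * (q * A - p * T)) + q * Vl + q * (S * l - Vl) := by
    rw [hKr]; ring
  rw [key] at hΛ'
  rw [abs_le] at hΛ' hnσ hql
  have hST : 0 ≤ S * T := mul_nonneg hS' hT.le
  rcases le_or_gt K k with h | h
  · have h3 : S * T * K ≤ S * T * k :=
      mul_le_mul_of_nonneg_left (by exact_mod_cast h) hST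
    have h4 := abs_le.1 (hkT k)
    linarith [h4.1, h4.2, hΛ'.1, hnσ.2, hql.2]
  · have h3 : S * T * (k + 1) ≤ S * T * K :=
      mul_le_mul_of_nonneg_left (by exact_mod_cast h) hST
    have h4 := abs_le.1 (hkT (k + 1))
    linarith [h4.1, h4.2, hΛ'.2, hnσ.1, hql.1]

/-- Approximates `10 ^ 335 * log d` for a digit `d ≥ 1`. -/
def logDigitApprox : ℕ → ℤ
  | 2 => logTwoApprox
  | 3 => logThreeApprox
  | 4 => 2 * logTwoApprox
  | 5 => logFiveApprox
  | 6 => logTwoApprox + logThreeApprox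
  | 7 => logSevenApprox
  | 8 => 3 * logTwoApprox
  | 9 => 2 * logThreeApprox
  | _ => 0

theorem logDigitApprox_spec {d : ℕ} (h1 : 1 ≤ d) (h9 : d < 10) :
    |(logScale : ℝ) * Real.log d - logDigitApprox d| ≤ 1000 := by
  have a2 := abs_le.1 logTwoApprox_spec
  have a3 := abs_le.1 logThreeApprox_spec
  have a5 := abs_le.1 logFiveApprox_spec
  have a7 := abs_le.1 logSevenApprox_spec
  have e4 : Real.log 4 = 2 * Real.log 2 := by
    rw [show (4 : ℝ) = 2 ^ 2 by norm_num, Real.log_pow]; norm_num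
  have e6 : Real.log 6 = Real.log 2 + Real.log 3 := by
    rw [← Real.log_mul (by norm_num) (by norm_num)]; norm_num
  have e8 : Real.log 8 = 3 * Real.log 2 := by
    rw [show (8 : ℝ) = 2 ^ 3 by norm_num, Real.log_pow]; norm_num
  have e9 : Real.log 9 = 2 * Real.log 3 := by
    rw [show (9 : ℝ) = 3 ^ 2 by norm_num, Real.log_pow]; norm_num
  obtain ⟨b2, c2⟩ := a2
  obtain ⟨b3, c3⟩ := a3
  obtain ⟨b5, c5⟩ := a5
  obtain ⟨b7, c7⟩ := a7
  have e1 : logDigitApprox 1 = 0 := rfl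
  have hd : d = 1 ∨ d = 2 ∨ d = 3 ∨ d = 4 ∨ d = 5 ∨ d = 6 ∨ d = 7 ∨ d = 8 ∨ d = 9 := by omega
  rw [abs_le]
  rcases hd with rfl | rfl | rfl | rfl | rfl | rfl | rfl | rfl | rfl
  · rw [e1]; norm_num
  all_goals
    simp only [logDigitApprox]
    push_cast
    try simp only [e4, e6, e8, e9]
    generalize (logScale : ℝ) = S at *
    generalize (logTwoApprox : ℝ) = v2 at *
    generalize (logThreeApprox : ℝ) = v3 at *
    generalize (logFiveApprox : ℝ) = v5 at *
    generalize (logSevenApprox : ℝ) = v7 at *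
    constructor <;> linarith

/-- Approximates `10 ^ 335 * log (9 / (√5 d))`. -/
def shiftApprox (d : ℕ) : ℤ := 2 * logThreeApprox - logFiveApprox / 2 - logDigitApprox d

/-- Denominator of a rational approximation to `log φ / log 10`, of size about `10 ^ 161`: just
above the bound `2 ^ 530` for `n`. -/
def bdDenominator : ℤ :=
  232331762535451707662866462251712778350665018073360132655927211888562750260735699881199686939982232868278300356380661413756456761058357085946552157086174416376565

/-- Numerator of the same rational approximation. -/
def bdNumerator : ℤ :=
  48554466807402468531427803407274829289860503099661206162505863338205749394531636247132683992525146106682185628013168988168875081891090842108210672334277422937101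

/-- The two inequalities needed for the Baker–Davenport reduction with leading digit `d` and `n ≤ 2
^ 530`. -/
def bdCheck (d : ℕ) : Bool :=
  let VT : ℤ := logTwoApprox + logFiveApprox
  let k : ℤ := -(bdDenominator * shiftApprox d) / VT
  let R : ℤ := 2 ^ 530 * (|bdDenominator * logGoldenApprox - bdNumerator * VT| +
    (bdDenominator + bdNumerator) * 5000)
  let D : ℤ := logScale / 20
  decide (k * VT + bdDenominator * shiftApprox d + (|k| + bdDenominator) * 5000 + R + D < 0) &&
  decide (0 < (k + 1) * VT + bdDenominator * shiftApprox d -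
    (|k + 1| + bdDenominator) * 5000 - R - D)

theorem bdCheck_true : ∀ d < 10, 1 ≤ d → bdCheck d = true := by decide +kernel

theorem shiftApprox_spec {d : ℕ} (h1 : 1 ≤ d) (h9 : d < 10) :
    |(logScale : ℝ) * (2 * Real.log 3 - Real.log 5 / 2 - Real.log d) - shiftApprox d| ≤ 5000 := by
  obtain ⟨b3, c3⟩ := abs_le.1 logThreeApprox_spec
  obtain ⟨b5, c5⟩ := abs_le.1 logFiveApprox_spec
  obtain ⟨bd, cd⟩ := abs_le.1 (logDigitApprox_spec h1 h9)
  have h2 : 2 * ((logFiveApprox : ℤ) / 2) ≤ logFiveApprox ∧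
      (logFiveApprox : ℤ) ≤ 2 * ((logFiveApprox : ℤ) / 2) + 1 := by
    generalize (logFiveApprox : ℤ) = v
    omega
  have h3 : (2 : ℝ) * (((logFiveApprox : ℤ) / 2 : ℤ) : ℝ) ≤ logFiveApprox := by
    exact_mod_cast h2.1
  have h4 : (logFiveApprox : ℝ) ≤ 2 * (((logFiveApprox : ℤ) / 2 : ℤ) : ℝ) + 1 := by
    exact_mod_cast h2.2
  rw [abs_le, shiftApprox]
  simp only [Int.cast_sub, Int.cast_mul, Int.cast_ofNat, Int.cast_natCast]
  generalize (((logFiveApprox : ℤ) / 2 : ℤ) : ℝ) = w at *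
  generalize (logScale : ℝ) = S at *
  generalize (logThreeApprox : ℝ) = v3 at *
  generalize (logFiveApprox : ℝ) = v5 at *
  generalize (logDigitApprox d : ℝ) = vd at *
  constructor <;> linarith

/-- Lower bound for `log (9 φ ^ n / (√5 d 10 ^ x))`. -/
theorem linear_form_lower_bound {n x d : ℕ} (hn : n < 2 ^ 530) (h1 : 1 ≤ d) (h9 : d < 10) :
    20 / (10 : ℝ) ^ 164 < |n * Real.log Real.goldenRatio - x * (Real.log 2 + Real.log 5) +
      (2 * Real.log 3 - Real.log 5 / 2 - Real.log d)| := by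
  by_contra! hΛ
  have hc := bdCheck_true d h9 h1
  simp only [bdCheck, Bool.and_eq_true, decide_eq_true_eq] at hc
  have hT : 0 < Real.log 2 + Real.log 5 :=
    add_pos (Real.log_pos (by norm_num)) (Real.log_pos (by norm_num))
  have hD : bdDenominator * logScale * 20 ≤ 10 ^ 164 * ((logScale : ℤ) / 20) := by decide +kernel
  have hq : 0 ≤ bdDenominator := by decide +kernel
  have hp : 0 ≤ bdNumerator := by decide +kernel
  refine no_small_linear_form (A := Real.log Real.goldenRatio) (T := Real.log 2 + Real.log 5)
    (l := 2 * Real.log 3 - Real.log 5 / 2 - Real.log d) (S := logScale) (VA := logGoldenApprox)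
    (VT := logTwoApprox + logFiveApprox) (Vl := shiftApprox d) (e := 5000) (N := 2 ^ 530)
    hT hq hp (Int.natCast_nonneg _) ?_ ?_ ?_ hc.1 hc.2 (n := n) (x := x) ?_ ?_
  · have := logGoldenApprox_spec
    simp only [Int.cast_natCast]
    refine this.trans ?_
    norm_num
  · obtain ⟨b2, c2⟩ := abs_le.1 logTwoApprox_spec
    obtain ⟨b5, c5⟩ := abs_le.1 logFiveApprox_spec
    simp only [Int.cast_natCast, Int.cast_add]
    generalize (logScale : ℝ) = S at *
    generalize (logTwoApprox : ℝ) = v3 at *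
    generalize (logFiveApprox : ℝ) = v5 at *
    rw [abs_le]
    norm_num
    constructor <;> linarith
  · simp only [Int.cast_natCast]
    refine (shiftApprox_spec h1 h9).trans ?_
    norm_num
  · exact_mod_cast hn.le
  · have hq' : (0 : ℝ) ≤ bdDenominator := by exact_mod_cast hq
    have hD' : (bdDenominator : ℝ) * ((logScale : ℤ) : ℝ) * 20 ≤
        10 ^ 164 * (((logScale : ℤ) / 20 : ℤ) : ℝ) := by exact_mod_cast hD
    refine (mul_le_mul_of_nonneg_left hΛ (mul_nonneg hq' (Int.cast_nonneg (Int.natCast_nonneg _)))).trans ?_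
    rw [mul_div_assoc', div_le_iff₀ (by positivity)]
    linarith

theorem abs_log_le {u δ : ℝ} (hδ : δ ≤ 1 / 2) (h : |u - 1| ≤ δ) : |Real.log u| ≤ 2 * δ := by
  obtain ⟨h1, h2⟩ := abs_le.1 h
  have hu : 0 < u := by linarith
  have h3 := Real.log_le_sub_one_of_pos hu
  have h4 := Real.one_sub_inv_le_log_of_pos hu
  have h5 : u⁻¹ ≤ 1 + 2 * δ := by
    rw [inv_le_comm₀ hu (by linarith), inv_le_iff_one_le_mul₀ (by linarith)]
    nlinarith
  rw [abs_le]
  constructor <;> linarith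

/-- If `9 F_n` agrees with `d * 10 ^ x` down to the place `y`, then the linear form in logarithms is
smaller than its lower bound unless `x - y ≤ 163`. -/
theorem leading_run_bound {n x y d : ℕ} (hn : n < 2 ^ 530) (h1 : 1 ≤ d) (h9 : d < 10) (hy : 1 ≤ y)
    (h : |9 * (Nat.fib n : ℤ) - d * 10 ^ x| ≤ 9 * 10 ^ y) : x < y + 164 := by
  have hlow := linear_form_lower_bound (x := x) hn h1 h9
  clear hn
  by_contra! hxy
  have hR : |9 * (Nat.fib n : ℝ) - d * 10 ^ x| ≤ 9 * 10 ^ y := by exact_mod_cast h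
  have hd : (1 : ℝ) ≤ d := by exact_mod_cast h1
  have h5 : (2 : ℝ) < √5 := by
    rw [Real.lt_sqrt (by norm_num)]; norm_num
  have hφ : (0 : ℝ) < Real.goldenRatio ^ n := pow_pos Real.goldenRatio_pos n
  have hψ : |Real.goldenConj ^ n| ≤ 1 := by
    rw [abs_pow]
    exact pow_le_one₀ (abs_nonneg _)
      (abs_le.2 ⟨Real.neg_one_lt_goldenConj.le, by linarith [Real.goldenConj_neg]⟩)
  have hy10 : (10 : ℝ) ≤ 10 ^ y := by
    simpa using pow_le_pow_right₀ (by norm_num : (1 : ℝ) ≤ 10) hy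
  have hx10 : (10 : ℝ) ^ y * 10 ^ 164 ≤ 10 ^ x := by
    rw [← pow_add]; exact pow_le_pow_right₀ (by norm_num) hxy
  set B : ℝ := d * 10 ^ x with hB
  have hBpos : 0 < B := by positivity
  set u : ℝ := 9 * Real.goldenRatio ^ n / √5 / B with hu
  have hmain : |9 * Real.goldenRatio ^ n / √5 - B| ≤ 10 * 10 ^ y := by
    have e : 9 * Real.goldenRatio ^ n / √5 - B =
        (9 * (Nat.fib n : ℝ) - B) + 9 / √5 * Real.goldenConj ^ n := by
      rw [Real.coe_fib_eq]; ring
    rw [e]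
    refine (abs_add_le _ _).trans ?_
    have h6 : |9 / √5 * Real.goldenConj ^ n| ≤ 9 / √5 := by
      rw [abs_mul, abs_of_pos (by positivity)]
      exact mul_le_of_le_one_right (by positivity) hψ
    have h7 : 9 / √5 ≤ 10 := by
      rw [div_le_iff₀ (by linarith)]; linarith
    linarith
  have hu1 : |u - 1| ≤ 10 / 10 ^ 164 := by
    have e : u - 1 = (9 * Real.goldenRatio ^ n / √5 - B) / B := by
      rw [sub_div, div_self hBpos.ne']
    rw [e, abs_div, abs_of_pos hBpos, div_le_div_iff₀ hBpos (by positivity)]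
    have h6 : (10 : ℝ) ^ x ≤ B := le_mul_of_one_le_left (by positivity) hd
    calc _ ≤ 10 * 10 ^ y * (10 : ℝ) ^ 164 := by gcongr
      _ ≤ 10 * 10 ^ x := by rw [mul_assoc]; gcongr
      _ ≤ 10 * B := by gcongr
  have hlog := abs_log_le (by norm_num) hu1
  have e : Real.log u = n * Real.log Real.goldenRatio - x * (Real.log 2 + Real.log 5) +
      (2 * Real.log 3 - Real.log 5 / 2 - Real.log d) := by
    have hd0 : (d : ℝ) ≠ 0 := by positivity
    rw [hu, hB, Real.log_div (by positivity) (by positivity), Real.log_div (by positivity) (by positivity),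
      Real.log_mul (by norm_num) hφ.ne', Real.log_mul hd0 (by positivity), Real.log_pow, Real.log_pow,
      Real.log_sqrt (by norm_num), show (10 : ℝ) = 2 * 5 by norm_num,
      Real.log_mul (by norm_num) (by norm_num), show (9 : ℝ) = 3 ^ 2 by norm_num, Real.log_pow]
    push_cast
    ring
  rw [← e] at hlow
  rw [← mul_div_assoc, show (2 : ℝ) * 10 = 20 by norm_num] at hlog
  exact absurd hlog (not_le.2 hlow)

/-! ### Bounds for Fibonacci numbers with three runs -/

/-- `F_n` consists of a run of the digit `d1` in the decimal places `[y, x)`, a run of `d2` in the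
places `[z, y)` and a run of `d3` in the places `[0, z)`; the identity is cleared of the
denominator `9` of the repunits. -/
structure ThreeRuns (n d1 d2 d3 x y z : ℕ) : Prop where
  one_le_d1 : 1 ≤ d1
  d1_lt : d1 < 10
  d2_lt : d2 < 10
  d3_lt : d3 < 10
  z_pos : 1 ≤ z
  z_lt : z < y
  y_lt : y < x
  nine_mul_fib : 9 * (Nat.fib n : ℤ) =
    d1 * 10 ^ x + ((d2 : ℤ) - d1) * 10 ^ y + ((d3 : ℤ) - d2) * 10 ^ z - d3

theorem nine_mul_repunit (l : ℕ) : (9 : ℤ) * (((10 ^ l - 1) / (10 - 1) : ℕ) : ℤ) = 10 ^ l - 1 := by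
  have h : 9 * ((10 ^ l - 1) / (10 - 1)) = 10 ^ l - 1 := by
    refine Nat.mul_div_cancel' ?_
    simpa using Nat.sub_dvd_pow_sub_pow 10 1 l
  have h' : 9 * ((10 ^ l - 1) / (10 - 1)) + 1 = 10 ^ l := by
    rw [h]; exact Nat.sub_add_cancel (Nat.one_le_pow _ _ (by norm_num))
  rw [eq_sub_iff_add_eq]
  exact_mod_cast h'

theorem exists_threeRuns {n : ℕ} (h : IsConcatThreeRepdigits 10 (Nat.fib n)) :
    ∃ d1 d2 d3 x y z, ThreeRuns n d1 d2 d3 x y z := by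
  obtain ⟨d1, d2, d3, l1, l2, l3, h1, h2, h3, h4, h5, h6, h7, h8⟩ := h
  refine ⟨d1, d2, d3, l1 + l2 + l3, l2 + l3, l3, h1, h2, h3, h4, h7, by omega, by omega, ?_⟩
  have e1 := nine_mul_repunit l1
  have e2 := nine_mul_repunit l2
  have e3 := nine_mul_repunit l3
  rw [h8]
  generalize (10 ^ l1 - 1) / (10 - 1) = r1 at *
  generalize (10 ^ l2 - 1) / (10 - 1) = r2 at *
  generalize (10 ^ l3 - 1) / (10 - 1) = r3 at *
  push_cast
  simp only [pow_add]
  linear_combination (d1 * 10 ^ l2 * 10 ^ l3 : ℤ) * e1 + (d2 * 10 ^ l3 : ℤ) * e2 + (d3 : ℤ) * e3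

theorem hasRuns_of_isConcat {N : ℕ} (h : IsConcatThreeRepdigits 10 N) : HasRuns 3 N := by
  obtain ⟨d1, d2, d3, l1, l2, l3, h1, h2, h3, h4, h5, h6, h7, h8⟩ := h
  refine ⟨d3, l3, _, h4, ⟨d2, l2, _, h3, ⟨d1, l1, 0, h2, rfl, rfl⟩, rfl⟩, ?_⟩
  rw [h8, pow_add]
  simp only [show 10 - 1 = 9 from rfl]
  ring

theorem ten_pow_le_fib (k : ℕ) : 10 ^ k ≤ Nat.fib (5 * k + 2) := by
  induction k with
  | zero => simp
  | succ k ih =>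
    have e1 : Nat.fib (5 * k + 3) = Nat.fib (5 * k + 1) + Nat.fib (5 * k + 2) := Nat.fib_add_two
    have e2 : Nat.fib (5 * k + 4) = Nat.fib (5 * k + 2) + Nat.fib (5 * k + 3) := Nat.fib_add_two
    have e3 : Nat.fib (5 * k + 5) = Nat.fib (5 * k + 3) + Nat.fib (5 * k + 4) := Nat.fib_add_two
    have e4 : Nat.fib (5 * k + 6) = Nat.fib (5 * k + 4) + Nat.fib (5 * k + 5) := Nat.fib_add_two
    have e5 : Nat.fib (5 * k + 7) = Nat.fib (5 * k + 5) + Nat.fib (5 * k + 6) := Nat.fib_add_two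
    have e6 : Nat.fib (5 * k + 2) = Nat.fib (5 * k) + Nat.fib (5 * k + 1) := Nat.fib_add_two
    have e7 := Nat.fib_le_fib_succ (n := 5 * k)
    rw [show 5 * (k + 1) + 2 = 5 * k + 7 by ring, pow_succ]
    omega

theorem two_pow_bound (t : ℕ) {C : ℤ} (hC : |C| ≤ 9 * 10 ^ t) : 3 * |C| + 9 ≤ 2 ^ (4 * t + 6) := by
  have h1 : (1 : ℤ) ≤ 10 ^ t := one_le_pow₀ (by norm_num)
  have h2 : (10 : ℤ) ^ t ≤ 16 ^ t := pow_le_pow_left₀ (by norm_num) (by norm_num) t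
  rw [pow_add, pow_mul]
  norm_num
  linarith

/-- The `5`-adic bound with the size of `C` measured in decimal digits. -/
theorem five_adic_digits {n e t m : ℕ} {C : ℤ} (hm : 15 ≤ m) (hmn : 104 * m * n ≤ 2 ^ m)
    (hC : |C| ≤ 9 * 10 ^ t) (hdvd : (5 : ℤ) ^ e ∣ 9 * (Nat.fib n : ℤ) - C) :
    n < 300 * (4 * t + 6) * m ∨ e < 2 * 10 ^ 8 * (4 * t + 6) ^ 2 * m ^ 4 := by
  rcases lt_or_ge n (300 * (4 * t + 6) * m) with h | h
  · exact .inl h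
  · exact .inr (five_adic_bound n e _ m C (by omega) hm h hmn (two_pow_bound t hC) hdvd)

namespace ThreeRuns

variable {n d1 d2 d3 x y z : ℕ}

/-- A Fibonacci number with `x` digits has index less than `5 x + 2`. -/
theorem index_lt (h : ThreeRuns n d1 d2 d3 x y z) : n < 5 * x + 2 := by
  by_contra! hn
  have h1 : (10 : ℤ) ^ x ≤ Nat.fib n := by
    exact_mod_cast (ten_pow_le_fib x).trans (Nat.fib_mono hn)
  have h2 := h.nine_mul_fib
  have hd1 : (d1 : ℤ) ≤ 9 := by exact_mod_cast Nat.le_of_lt_succ h.d1_lt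
  have hd2 : (d2 : ℤ) ≤ 9 := by exact_mod_cast Nat.le_of_lt_succ h.d2_lt
  have hd3 : (d3 : ℤ) ≤ 9 := by exact_mod_cast Nat.le_of_lt_succ h.d3_lt
  have hz : (1 : ℤ) ≤ 10 ^ z := one_le_pow₀ (by norm_num)
  have hzy : (10 : ℤ) ^ z ≤ 10 ^ y := pow_le_pow_right₀ (by norm_num) h.z_lt.le
  have hyx : (10 : ℤ) ^ y ≤ 10 ^ x := pow_le_pow_right₀ (by norm_num) h.y_lt.le
  have p1 := mul_nonneg (sub_nonneg.2 hd1) (sub_nonneg.2 hyx)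
  have p2 := mul_nonneg (sub_nonneg.2 hd2) (sub_nonneg.2 hzy)
  have p3 := mul_nonneg (sub_nonneg.2 hd3) (sub_nonneg.2 hz)
  linarith

theorem abs_middle_le (h : ThreeRuns n d1 d2 d3 x y z) :
    |((d3 : ℤ) - d2) * 10 ^ z - d3| ≤ 9 * 10 ^ z := by
  have hd2 : (d2 : ℤ) ≤ 9 := by exact_mod_cast Nat.le_of_lt_succ h.d2_lt
  have hd3 : (d3 : ℤ) ≤ 9 := by exact_mod_cast Nat.le_of_lt_succ h.d3_lt
  have hz : (1 : ℤ) ≤ 10 ^ z := one_le_pow₀ (by norm_num)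
  have hd2' : (0 : ℤ) ≤ d2 := Int.natCast_nonneg _
  have hd3' : (0 : ℤ) ≤ d3 := Int.natCast_nonneg _
  rw [abs_le]
  constructor <;> nlinarith

theorem abs_tail_le (h : ThreeRuns n d1 d2 d3 x y z) :
    |((d2 : ℤ) - d1) * 10 ^ y + ((d3 : ℤ) - d2) * 10 ^ z - d3| ≤ 9 * 10 ^ y := by
  have hd1 : (d1 : ℤ) ≤ 9 := by exact_mod_cast Nat.le_of_lt_succ h.d1_lt
  have hd2 : (d2 : ℤ) ≤ 9 := by exact_mod_cast Nat.le_of_lt_succ h.d2_lt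
  have hd3 : (d3 : ℤ) ≤ 9 := by exact_mod_cast Nat.le_of_lt_succ h.d3_lt
  have hd1' : (0 : ℤ) ≤ d1 := Int.natCast_nonneg _
  have hd2' : (0 : ℤ) ≤ d2 := Int.natCast_nonneg _
  have hd3' : (0 : ℤ) ≤ d3 := Int.natCast_nonneg _
  have hz : (1 : ℤ) ≤ 10 ^ z := one_le_pow₀ (by norm_num)
  have hzy : (10 : ℤ) ^ z ≤ 10 ^ y := pow_le_pow_right₀ (by norm_num) h.z_lt.le
  have p2 := mul_nonneg (sub_nonneg.2 hd2) (sub_nonneg.2 hzy)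
  have p3 := mul_nonneg (sub_nonneg.2 hd3) (sub_nonneg.2 hz)
  have p4 := mul_nonneg hd2' (sub_nonneg.2 hzy)
  have p5 := mul_nonneg hd3' (sub_nonneg.2 hz)
  have p6 : 0 ≤ (d1 : ℤ) * 10 ^ y := by positivity
  have p7 : (d1 : ℤ) * 10 ^ y ≤ 9 * 10 ^ y := by gcongr
  rw [abs_le]
  constructor <;> linarith

theorem ten_pow_z_dvd (h : ThreeRuns n d1 d2 d3 x y z) :
    (10 : ℤ) ^ z ∣ 9 * (Nat.fib n : ℤ) + d3 := by
  obtain ⟨a, rfl⟩ := Nat.exists_eq_add_of_lt h.z_lt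
  obtain ⟨b, rfl⟩ := Nat.exists_eq_add_of_lt h.y_lt
  refine ⟨d1 * 10 ^ (a + 1 + (b + 1)) + ((d2 : ℤ) - d1) * 10 ^ (a + 1) + ((d3 : ℤ) - d2), ?_⟩
  rw [h.nine_mul_fib]
  ring

theorem ten_pow_y_dvd (h : ThreeRuns n d1 d2 d3 x y z) :
    (10 : ℤ) ^ y ∣ 9 * (Nat.fib n : ℤ) - (((d3 : ℤ) - d2) * 10 ^ z - d3) := by
  obtain ⟨b, rfl⟩ := Nat.exists_eq_add_of_lt h.y_lt
  refine ⟨d1 * 10 ^ (b + 1) + ((d2 : ℤ) - d1), ?_⟩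
  rw [h.nine_mul_fib]
  ring

theorem ten_pow_x_dvd (h : ThreeRuns n d1 d2 d3 x y z) :
    (10 : ℤ) ^ x ∣ 9 * (Nat.fib n : ℤ) -
      (((d2 : ℤ) - d1) * 10 ^ y + ((d3 : ℤ) - d2) * 10 ^ z - d3) :=
  ⟨d1, by rw [h.nine_mul_fib]; ring⟩

theorem five_pow_dvd {a : ℤ} {e : ℕ} (h : (10 : ℤ) ^ e ∣ a) : (5 : ℤ) ^ e ∣ a :=
  (pow_dvd_pow_of_dvd (by norm_num) e).trans h

theorem abs_neg_d3_le (h : ThreeRuns n d1 d2 d3 x y z) : |(-(d3 : ℤ))| ≤ 9 * 10 ^ 0 := by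
  have := h.d3_lt
  rw [abs_neg, Nat.abs_cast]
  norm_num
  omega

/-- Three successive applications of the `5`-adic bound, to the end of each run in turn. -/
theorem polynomial_bound (h : ThreeRuns n d1 d2 d3 x y z) {m : ℕ} (hm : 15 ≤ m)
    (hmn : 104 * m * n ≤ 2 ^ m) : n ≤ 2 ^ 237 * m ^ 28 := by
  have hpow : ∀ i j : ℕ, i ≤ j → m ^ i ≤ m ^ j := fun i j hij => Nat.pow_le_pow_right (by omega) hij
  have hm4 : 1 ≤ m ^ 4 := Nat.one_le_pow _ _ (by omega)
  have hm12 : 1 ≤ m ^ 12 := Nat.one_le_pow _ _ (by omega)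
  have hm28 : 1 ≤ m ^ 28 := Nat.one_le_pow _ _ (by omega)
  have h1 := hpow 1 28 (by norm_num)
  have h5 := hpow 5 28 (by norm_num)
  have h13 := hpow 13 28 (by norm_num)
  rcases five_adic_digits hm hmn h.abs_neg_d3_le
    (by rw [sub_neg_eq_add]; exact five_pow_dvd h.ten_pow_z_dvd) with hz | hz
  · refine hz.le.trans ?_
    rw [pow_one] at h1
    omega
  replace hz : 4 * z + 6 ≤ 2 ^ 36 * m ^ 4 := by omega
  rcases five_adic_digits hm hmn h.abs_middle_le (five_pow_dvd h.ten_pow_y_dvd) with hy | hy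
  · calc n ≤ 300 * (4 * z + 6) * m := hy.le
      _ ≤ 300 * (2 ^ 36 * m ^ 4) * m := by gcongr
      _ = 300 * 2 ^ 36 * m ^ 5 := by ring
      _ ≤ 2 ^ 237 * m ^ 28 := Nat.mul_le_mul (by norm_num) h5
  replace hy : 4 * y + 6 ≤ 2 ^ 103 * m ^ 12 := by
    have : 2 * 10 ^ 8 * (4 * z + 6) ^ 2 * m ^ 4 ≤ 2 ^ 28 * 2 ^ 72 * m ^ 12 := by
      calc _ ≤ 2 ^ 28 * (2 ^ 36 * m ^ 4) ^ 2 * m ^ 4 := by gcongr; norm_num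
        _ = _ := by ring
    omega
  rcases five_adic_digits hm hmn h.abs_tail_le (five_pow_dvd h.ten_pow_x_dvd) with hx | hx
  · calc n ≤ 300 * (4 * y + 6) * m := hx.le
      _ ≤ 300 * (2 ^ 103 * m ^ 12) * m := by gcongr
      _ = 300 * 2 ^ 103 * m ^ 13 := by ring
      _ ≤ 2 ^ 237 * m ^ 28 := Nat.mul_le_mul (by norm_num) h13
  have : 2 * 10 ^ 8 * (4 * y + 6) ^ 2 * m ^ 4 ≤ 2 ^ 28 * 2 ^ 206 * m ^ 28 := by
    calc _ ≤ 2 ^ 28 * (2 ^ 103 * m ^ 12) ^ 2 * m ^ 4 := by gcongr; norm_num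
      _ = _ := by ring
  have := h.index_lt
  omega

end ThreeRuns

/-- Used with `b = log₂ n`: the bound `n ≤ 2 ^ 237 (2 b) ^ 28` fails from `b = 530` on. -/
theorem poly_lt_two_pow {b : ℕ} (hb : 530 ≤ b) : 2 ^ 265 * b ^ 28 < 2 ^ b := by
  induction b, hb using Nat.le_induction with
  | base => decide +kernel
  | succ b hb ih =>
    have h1 : 530 * (b + 1) ≤ 531 * b := by omega
    have h2 : 530 ^ 28 * (b + 1) ^ 28 ≤ 530 ^ 28 * (2 * b ^ 28) := by
      calc 530 ^ 28 * (b + 1) ^ 28 = (530 * (b + 1)) ^ 28 := (mul_pow _ _ _).symm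
        _ ≤ (531 * b) ^ 28 := Nat.pow_le_pow_left h1 28
        _ = 531 ^ 28 * b ^ 28 := mul_pow _ _ _
        _ ≤ (530 ^ 28 * 2) * b ^ 28 := Nat.mul_le_mul_right _ (by norm_num)
        _ = _ := mul_assoc _ _ _
    have h3 := Nat.le_of_mul_le_mul_left h2 (by positivity)
    rw [pow_succ 2 b]
    calc 2 ^ 265 * (b + 1) ^ 28 ≤ 2 ^ 265 * (2 * b ^ 28) := Nat.mul_le_mul_left _ h3
      _ = 2 ^ 265 * b ^ 28 * 2 := by rw [mul_comm 2 (b ^ 28), mul_assoc]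
      _ < 2 ^ b * 2 := Nat.mul_lt_mul_of_pos_right ih (by norm_num)

namespace ThreeRuns

variable {n d1 d2 d3 x y z : ℕ}

theorem log_lt (h : ThreeRuns n d1 d2 d3 x y z) (hn : n ≠ 0) : Nat.log 2 n < 530 := by
  by_contra! hb
  have h1 : 2 ^ Nat.log 2 n ≤ n := Nat.pow_log_le_self 2 hn
  have h2 : n < 2 ^ (Nat.log 2 n + 1) := Nat.lt_pow_succ_log_self (by norm_num) n
  have h3 := poly_lt_two_pow hb
  generalize Nat.log 2 n = b at *
  have h4 : 416 * b ≤ 2 ^ b := by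
    refine le_trans ?_ h3.le
    refine Nat.mul_le_mul (by decide +kernel) (Nat.le_self_pow (by norm_num) b)
  have h5 : 104 * (2 * b) * n ≤ 2 ^ (2 * b) := by
    calc 104 * (2 * b) * n ≤ 104 * (2 * b) * 2 ^ (b + 1) := by gcongr
      _ = 416 * b * 2 ^ b := by ring
      _ ≤ 2 ^ b * 2 ^ b := by gcongr
      _ = 2 ^ (2 * b) := by ring
  have h6 := h.polynomial_bound (by omega) h5
  rw [mul_pow, ← mul_assoc, ← pow_add] at h6
  exact absurd (h1.trans h6) (not_le.2 h3)

theorem lt_two_pow (h : ThreeRuns n d1 d2 d3 x y z) : n < 2 ^ 530 := by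
  rcases eq_or_ne n 0 with rfl | hn
  · exact Nat.pow_pos (by norm_num)
  · exact (Nat.lt_pow_succ_log_self (by norm_num) n).trans_le
      (Nat.pow_le_pow_right (by norm_num) (h.log_lt hn))

theorem first_run_short (h : ThreeRuns n d1 d2 d3 x y z) : x < y + 164 := by
  refine leading_run_bound h.lt_two_pow h.one_le_d1 h.d1_lt (by have := h.z_lt; omega) ?_
  refine le_trans (le_of_eq ?_) h.abs_tail_le
  rw [h.nine_mul_fib]
  ring_nf

theorem z_lt_of_zCheck (h : ThreeRuns n d1 d2 d3 x y z) {N E M : ℕ} (hM : 5 ^ E = M) (hM9 : 9 ≤ M)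
    (hN : N ≤ 4 * M) (hc : zCheck N E M = true) (hn : 1100 ≤ n) (hnN : n < N) : z < E := by
  by_contra! hz
  exact zCheck_spec hM hM9 hN hc h.d3_lt hn hnN
    ((pow_dvd_pow 5 hz).trans (five_pow_dvd h.ten_pow_z_dvd))

/-- The index `n` is bounded by the `5`-adic bound at the end of the middle run and the shortness of
the first run, given a bound `Z` for the length of the last run and `m` slightly larger than `log₂
n`. -/
theorem refine_bound (h : ThreeRuns n d1 d2 d3 x y z) {m Z : ℕ} (hm : 15 ≤ m)
    (hmn : 104 * m * n ≤ 2 ^ m) (hz : z ≤ Z) :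
    n < 300 * (4 * Z + 6) * m ∨ n < 5 * (2 * 10 ^ 8 * (4 * Z + 6) ^ 2 * m ^ 4 + 164) := by
  rcases five_adic_digits hm hmn h.abs_middle_le (five_pow_dvd h.ten_pow_y_dvd) with hy | hy
  · exact .inl (hy.trans_le (by gcongr))
  · right
    have h1 := h.index_lt
    have h2 := h.first_run_short
    have h3 : 2 * 10 ^ 8 * (4 * z + 6) ^ 2 * m ^ 4 ≤ 2 * 10 ^ 8 * (4 * Z + 6) ^ 2 * m ^ 4 := by
      gcongr
    omega

theorem lt_two_pow_87 (h : ThreeRuns n d1 d2 d3 x y z) (hn : 1100 ≤ n) : n < 2 ^ 87 := by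
  have hz := h.z_lt_of_zCheck rfl (by decide +kernel) (by decide +kernel) zCheck_big hn h.lt_two_pow
  have hmn : 104 * 546 * n ≤ 2 ^ 546 :=
    (Nat.mul_le_mul_left _ h.lt_two_pow.le).trans (by decide +kernel)
  rcases h.refine_bound (by norm_num) hmn (Nat.le_of_lt_succ hz) with h1 | h1
  · exact h1.trans_le (by decide +kernel)
  · exact h1.trans_le (by decide +kernel)

theorem lt_two_pow_72 (h : ThreeRuns n d1 d2 d3 x y z) (hn : 1100 ≤ n) : n < 2 ^ 72 := by
  have hz := h.z_lt_of_zCheck rfl (by decide +kernel) (by decide +kernel) zCheck_mid hn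
    (h.lt_two_pow_87 hn)
  have hmn : 104 * 101 * n ≤ 2 ^ 101 :=
    (Nat.mul_le_mul_left _ (h.lt_two_pow_87 hn).le).trans (by decide +kernel)
  rcases h.refine_bound (by norm_num) hmn (Nat.le_of_lt_succ hz) with h1 | h1
  · exact h1.trans_le (by decide +kernel)
  · exact h1.trans_le (by decide +kernel)

theorem lt_1100 (h : ThreeRuns n d1 d2 d3 x y z) : n < 1100 := by
  by_contra! hn
  have h72 := h.lt_two_pow_72 hn
  have hz : z < 36 :=
    h.z_lt_of_zCheck rfl (by decide +kernel) (by decide +kernel) zCheck_small hn h72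
  have hy : y < 36 := by
    by_contra! hy
    refine yCheck_spec (by norm_num) (by norm_num) yCheck_small h.d2_lt h.d3_lt hz hn
      (h72.trans_eq (by norm_num)) ?_ ((pow_dvd_pow 5 hy).trans (five_pow_dvd h.ten_pow_y_dvd))
    intro h3
    have h8 : (8 : ℤ) ∣ 10 ^ 3 := by norm_num
    exact (h8.trans (pow_dvd_pow 10 h3)).trans h.ten_pow_z_dvd
  have := h.first_run_short
  have := h.index_lt
  clear h72
  omega

end ThreeRuns

theorem stmt_19 :
    (17711 = Nat.fib 22) ∧
    (17711 = 1 * ((10 ^ 1 - 1) / (10 - 1)) * 10 ^ (2 + 2) + 7 * ((10 ^ 2 - 1) / (10 - 1)) * 10 ^ 2 + 1 * ((10 ^ 2 - 1) / (10 - 1))) ∧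
    IsConcatThreeRepdigits 10 17711 ∧
    (∀ n : ℕ, IsConcatThreeRepdigits 10 (Nat.fib n) → Nat.fib n ≤ 17711) := by
  refine ⟨by decide +kernel, by norm_num, ⟨1, 7, 1, 1, 2, 2, by norm_num⟩, ?_⟩
  intro n hn
  obtain ⟨d1, d2, d3, x, y, z, h⟩ := exists_threeRuns hn
  have h22 : n ≤ 22 := by
    by_contra! h22
    exact not_hasRuns_fib h22 h.lt_1100 (hasRuns_of_isConcat hn)
  exact (Nat.fib_mono h22).trans (by decide +kernel)
end
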